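/- arXiv:1212.1424 — 2 statements merged into one kernel-verified Lean document; each statement's English description precedes it below -/
import Mathlib

section
/- Let Q be a Euclidean quiver. Suppose d_1 and d_2 are dimension vectors whose canonical decompositions only involve real Schur roots of non-regular indecomposables (strongly prehomogeneous). Then rep(Q)_{d_1} ∩ rep(Q)_{d_2} = rep(Q)_{d_3} for some prehomogeneous dimension vector d_3; i.e., the intersection of the two semi-stable subcategories is again semi-stable. -/
open Matrix BigOperators

/-- A finite quiver: `n` vertices, `a` arrows with source and target maps. -/
structure FinQuiver where
  n : ℕ
  a : ℕ
  src : Fin a → Fin n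
  tgt : Fin a → Fin n

namespace FinQuiver

/-- A finite quiver is acyclic iff it admits a topological ordering of vertices. -/
def Acyclic (Q : FinQuiver) : Prop :=
  ∃ h : Fin Q.n → ℕ, ∀ x, h (Q.src x) < h (Q.tgt x)

/-- Connectivity of the underlying graph. -/
def Connected (Q : FinQuiver) : Prop :=
  ∀ S : Finset (Fin Q.n), S.Nonempty → S ≠ Finset.univ →
    ∃ x, (Q.src x ∈ S ∧ Q.tgt x ∉ S) ∨ (Q.tgt x ∈ S ∧ Q.src x ∉ S)

/-- The Euler form ⟨d,e⟩ = Σ_i d_i e_i − Σ_{α : i → j} d_i e_j. -/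
def euler (Q : FinQuiver) (d e : Fin Q.n → ℤ) : ℤ :=
  (∑ i, d i * e i) - ∑ x, d (Q.src x) * e (Q.tgt x)

/-- A (possibly disconnected) Dynkin quiver: acyclic with positive definite Tits form. -/
def IsDynkin (Q : FinQuiver) : Prop :=
  Q.Acyclic ∧ ∀ d : Fin Q.n → ℤ, d ≠ 0 → 0 < Q.euler d d

/-- `δ` is the null root: positive, isotropic, and every isotropic vector is an
integer multiple of `δ`. -/
def IsNullRoot (Q : FinQuiver) (δ : Fin Q.n → ℤ) : Prop :=
  (∀ i, 0 < δ i) ∧ Q.euler δ δ = 0 ∧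
    ∀ d : Fin Q.n → ℤ, Q.euler d d = 0 → ∃ m : ℤ, d = m • δ

/-- A Euclidean (affine) quiver: connected, acyclic, positive semidefinite Tits form
with a null root. -/
def IsEuclidean (Q : FinQuiver) : Prop :=
  Q.Acyclic ∧ Q.Connected ∧ (∀ d, 0 ≤ Q.euler d d) ∧ ∃ δ, Q.IsNullRoot δ

end FinQuiver

/-- A finite-dimensional representation of `Q` over `k`: dimensions at each vertex,
and a matrix for each arrow. -/
structure QRep (k : Type) [Field k] (Q : FinQuiver) where
  d : Fin Q.n → ℕ
  mat : ∀ x : Fin Q.a, Matrix (Fin (d (Q.tgt x))) (Fin (d (Q.src x))) k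

namespace QRep

variable {k : Type} [Field k] {Q : FinQuiver}

/-- The dimension vector of a representation, as an integer vector. -/
def dimVec (M : QRep k Q) : Fin Q.n → ℤ := fun i => (M.d i : ℤ)

/-- The space of morphisms of representations `M → N`. -/
def homSpace (M N : QRep k Q) :
    Submodule k (∀ i, Matrix (Fin (N.d i)) (Fin (M.d i)) k) where
  carrier := {f | ∀ x, f (Q.tgt x) * M.mat x = N.mat x * f (Q.src x)}
  add_mem' := by
    intro f g hf hg x
    simp only [Pi.add_apply, Matrix.add_mul, Matrix.mul_add, hf x, hg x]
  zero_mem' := by intro x; simp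
  smul_mem' := by
    intro c f hf x
    simp only [Pi.smul_apply, Matrix.smul_mul, Matrix.mul_smul, hf x]

/-- The standard map whose kernel is `Hom(M,N)` and cokernel is `Ext¹(M,N)`. -/
def extMap (M N : QRep k Q) :
    (∀ i, Matrix (Fin (N.d i)) (Fin (M.d i)) k) →ₗ[k]
    (∀ x : Fin Q.a, Matrix (Fin (N.d (Q.tgt x))) (Fin (M.d (Q.src x))) k) where
  toFun f := fun x => f (Q.tgt x) * M.mat x - N.mat x * f (Q.src x)
  map_add' := by
    intro f g; funext x
    simp only [Pi.add_apply, Matrix.add_mul, Matrix.mul_add]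
    abel
  map_smul' := by
    intro c f; funext x
    simp only [Pi.smul_apply, Matrix.smul_mul, Matrix.mul_smul, RingHom.id_apply,
      smul_sub]

/-- dim_k Hom(M,N). -/
noncomputable def homDim (M N : QRep k Q) : ℕ :=
  Module.finrank k (homSpace M N)

/-- dim_k Ext¹(M,N), defined as the dimension of the cokernel of `extMap`. -/
noncomputable def extDim (M N : QRep k Q) : ℕ :=
  Module.finrank k
    ((∀ x : Fin Q.a, Matrix (Fin (N.d (Q.tgt x))) (Fin (M.d (Q.src x))) k) ⧸
      LinearMap.range (extMap M N))

/-- Isomorphism of representations. -/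
def IsoRep (M N : QRep k Q) : Prop :=
  ∃ f ∈ homSpace M N, ∀ i, Function.Bijective (Matrix.mulVecLin (f i))

/-- `L` is (the source of a monomorphism into) a subrepresentation of `M`. -/
def IsSubrep (L M : QRep k Q) : Prop :=
  ∃ f ∈ homSpace L M, ∀ i, Function.Injective (Matrix.mulVecLin (f i))

/-- `L` is a direct summand of `M` (split monomorphism with retraction). -/
def IsSummand (L M : QRep k Q) : Prop :=
  ∃ f ∈ homSpace L M, ∃ g ∈ homSpace M L, ∀ i, g i * f i = 1

/-- `M` is indecomposable: nonzero, and its endomorphism ring has no nontrivial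
idempotents. -/
def Indec (M : QRep k Q) : Prop :=
  (∃ i, M.d i ≠ 0) ∧
    ∀ f ∈ homSpace M M, (∀ i, f i * f i = f i) → f = 0 ∨ f = 1

/-- An exceptional representation: indecomposable and rigid. -/
def Exceptional (M : QRep k Q) : Prop :=
  Indec M ∧ extDim M M = 0

/-- `(f, g)` form a short exact sequence `0 → A → B → C → 0` of representations. -/
def IsSES (A B C : QRep k Q)
    (f : ∀ i, Matrix (Fin (B.d i)) (Fin (A.d i)) k)
    (g : ∀ i, Matrix (Fin (C.d i)) (Fin (B.d i)) k) : Prop :=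
  f ∈ homSpace A B ∧ g ∈ homSpace B C ∧
    ∀ i, Function.Injective (Matrix.mulVecLin (f i)) ∧
      Function.Surjective (Matrix.mulVecLin (g i)) ∧
      LinearMap.range (Matrix.mulVecLin (f i)) = LinearMap.ker (Matrix.mulVecLin (g i))

/-- A thick (= abelian and extension-closed, since rep(Q) is hereditary) full
subcategory: closed under isomorphism, direct summands and two-out-of-three for
short exact sequences. -/
def Thick (P : QRep k Q → Prop) : Prop :=
  (∀ M N, IsoRep M N → P M → P N) ∧
  (∀ L M, IsSummand L M → P M → P L) ∧
  (∀ A B C f g, IsSES A B C f g →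
    ((P A → P B → P C) ∧ (P A → P C → P B) ∧ (P B → P C → P A)))

/-- `P` is the smallest thick subcategory containing `S`. -/
def GeneratedBy (P : QRep k Q → Prop) (S : Set (QRep k Q)) : Prop :=
  Thick P ∧ (∀ X ∈ S, P X) ∧
    ∀ P' : QRep k Q → Prop, Thick P' → (∀ X ∈ S, P' X) → ∀ M, P M → P' M

/-- An exceptional sequence. -/
def ExcSeq {r : ℕ} (E : Fin r → QRep k Q) : Prop :=
  (∀ i, Exceptional (E i) ∧ homDim (E i) (E i) = 1) ∧
    ∀ i j : Fin r, i < j → homDim (E i) (E j) = 0 ∧ extDim (E i) (E j) = 0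

/-- King's criterion for `⟨d,−⟩`-semi-stability. -/
def SemiStable (d : Fin Q.n → ℤ) (M : QRep k Q) : Prop :=
  Q.euler d M.dimVec = 0 ∧ ∀ L : QRep k Q, IsSubrep L M → Q.euler d L.dimVec ≤ 0

/-- `M` is regular: every indecomposable summand pairs to zero with the null root. -/
def RegularRep (δ : Fin Q.n → ℤ) (M : QRep k Q) : Prop :=
  ∀ L, IsSummand L M → Indec L → Q.euler δ L.dimVec = 0

/-- `M` is in the right perpendicular category of `V`. -/
def RPerp (V M : QRep k Q) : Prop := homDim V M = 0 ∧ extDim V M = 0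

/-- `M` is in the left perpendicular category of `V`. -/
def LPerp (V M : QRep k Q) : Prop := homDim M V = 0 ∧ extDim M V = 0

/-- `P` is a projective representation (Ext¹(P,−) = 0). -/
def IsProjRep (P : QRep k Q) : Prop := ∀ M : QRep k Q, extDim P M = 0

end QRep

/-- `α` is a Schur root: the dimension vector of an indecomposable representation
with trivial endomorphism ring. -/
def IsSchurRoot (k : Type) [Field k] (Q : FinQuiver) (α : Fin Q.n → ℤ) : Prop :=
  ∃ M : QRep k Q, M.dimVec = α ∧ QRep.Indec M ∧ QRep.homDim M M = 1

/-- `ext(α,β) = 0`: some representations of these dimension vectors have no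
extensions. -/
def ExtZero (k : Type) [Field k] (Q : FinQuiver) (α β : Fin Q.n → ℤ) : Prop :=
  ∃ M N : QRep k Q, M.dimVec = α ∧ N.dimVec = β ∧ QRep.extDim M N = 0

/-- Kac's characterization of the canonical decomposition: `c` is the canonical
decomposition of `d` iff the entries sum to `d`, are Schur roots, and are pairwise
ext-orthogonal. -/
def IsCanonDecomp (k : Type) [Field k] (Q : FinQuiver) (d : Fin Q.n → ℤ)
    (c : List (Fin Q.n → ℤ)) : Prop :=
  c.sum = d ∧ (∀ α ∈ c, IsSchurRoot k Q α) ∧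
    ∀ i j : Fin c.length, i ≠ j → ExtZero k Q (c.get i) (c.get j)


/-! ### Module-valued representations -/

/-- A finite-dimensional representation with abstract vector spaces. -/
structure MRep (k : Type) [Field k] (Q : FinQuiver) where
  V : Fin Q.n → Type
  [acg : ∀ i, AddCommGroup (V i)]
  [mod : ∀ i, Module k (V i)]
  [fd : ∀ i, FiniteDimensional k (V i)]
  map : ∀ x : Fin Q.a, V (Q.src x) →ₗ[k] V (Q.tgt x)

attribute [instance] MRep.acg MRep.mod MRep.fd

namespace MRep

variable {k : Type} [Field k] {Q : FinQuiver}

/-- Families of linear maps. -/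
abbrev Fam (M N : MRep k Q) := ∀ i, M.V i →ₗ[k] N.V i

/-- Morphisms. -/
def IsHom (M N : MRep k Q) (f : Fam M N) : Prop :=
  ∀ x v, f (Q.tgt x) (M.map x v) = N.map x (f (Q.src x) v)

def HomZ (M N : MRep k Q) : Prop := ∀ f, IsHom M N f → ∀ i v, f i v = 0

def ExtZ (M N : MRep k Q) : Prop :=
  ∀ ξ : ∀ x : Fin Q.a, M.V (Q.src x) →ₗ[k] N.V (Q.tgt x),
    ∃ h : Fam M N, ∀ x v, ξ x v = h (Q.tgt x) (M.map x v) - N.map x (h (Q.src x) v)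

def Perp (M N : MRep k Q) : Prop := HomZ M N ∧ ExtZ M N

/-- Short exact sequences. -/
structure SES (A B C : MRep k Q) (f : Fam A B) (g : Fam B C) : Prop where
  hf : IsHom A B f
  hg : IsHom B C g
  inj : ∀ i, Function.Injective (f i)
  surj : ∀ i, Function.Surjective (g i)
  zero : ∀ i a, g i (f i a) = 0
  ex : ∀ i b, g i b = 0 → ∃ a, f i a = b

theorem IsHom.comp {A B C : MRep k Q} {f : Fam A B} {g : Fam B C}
    (hg : IsHom B C g) (hf : IsHom A B f) : IsHom A C (fun i => g i ∘ₗ f i) := by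
  intro x v
  simp [hf x v, hg x]

theorem IsHom.sub {A B : MRep k Q} {f g : Fam A B}
    (hf : IsHom A B f) (hg : IsHom A B g) : IsHom A B (fun i => f i - g i) := by
  intro x v
  simp [hf x v, hg x v]

theorem IsHom.id (A : MRep k Q) : IsHom A A (fun _ => LinearMap.id) := by
  intro x v; rfl

theorem SES.split {A B C : MRep k Q} {f : Fam A B} {g : Fam B C} (H : SES A B C f g) :
    ∃ (r : Fam B A) (s : Fam C B), (∀ i a, r i (f i a) = a) ∧ (∀ i c, g i (s i c) = c) ∧
      ∀ i b, f i (r i b) + s i (g i b) = b := by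
  have h1 : ∀ i, ∃ r : B.V i →ₗ[k] A.V i, r ∘ₗ f i = LinearMap.id := fun i =>
    LinearMap.exists_leftInverse_of_injective _ (LinearMap.ker_eq_bot.2 (H.inj i))
  have h2 : ∀ i, ∃ s : C.V i →ₗ[k] B.V i, g i ∘ₗ s = LinearMap.id := fun i =>
    LinearMap.exists_rightInverse_of_surjective _ (LinearMap.range_eq_top.2 (H.surj i))
  choose r hr using h1
  choose s hs using h2
  have hr' : ∀ i a, r i (f i a) = a := fun i a => LinearMap.congr_fun (hr i) a
  have hs' : ∀ i a, g i (s i a) = a := fun i a => LinearMap.congr_fun (hs i) a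
  refine ⟨r, fun i => s i - f i ∘ₗ r i ∘ₗ s i, hr', ?_, ?_⟩
  · intro i c
    simp [hs', H.zero]
  · intro i b
    obtain ⟨a, ha⟩ := H.ex i (b - s i (g i b)) (by simp [hs'])
    have : b = f i a + s i (g i b) := by rw [ha]; abel
    have h3 : r i b = a + r i (s i (g i b)) := by
      conv_lhs => rw [this]
      rw [map_add, hr']
    simp only [LinearMap.sub_apply, LinearMap.comp_apply, h3, map_add]
    conv_rhs => rw [this]
    abel

section les
variable {A B C : MRep k Q} {f : Fam A B} {g : Fam B C}

theorem SES.c1 (H : SES A B C f g) {X : MRep k Q} (h : ExtZ X B) : ExtZ X C := by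
  obtain ⟨r, s, h1, h2, h3⟩ := H.split
  intro ξ
  obtain ⟨e, he⟩ := h (fun x => s _ ∘ₗ ξ x)
  refine ⟨fun i => g i ∘ₗ e i, fun x v => ?_⟩
  have := congrArg (g _) (he x v)
  simpa [h2, H.hg x] using this

theorem SES.c2 (H : SES A B C f g) {X : MRep k Q} (hA : ExtZ X A) (hC : ExtZ X C) : ExtZ X B := by
  obtain ⟨r, s, h1, h2, h3⟩ := H.split
  intro ξ
  obtain ⟨e, he⟩ := hC (fun x => g _ ∘ₗ ξ x)
  obtain ⟨e', he'⟩ := hA (fun x => r _ ∘ₗ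
    (ξ x - ((s _ ∘ₗ e _) ∘ₗ X.map x - B.map x ∘ₗ (s _ ∘ₗ e _))))
  refine ⟨fun i => s i ∘ₗ e i + f i ∘ₗ e' i, fun x v => ?_⟩
  have a1 := he x v
  have a2 := congrArg (f _) (he' x v)
  simp only [LinearMap.comp_apply, LinearMap.sub_apply, LinearMap.add_apply] at a1 a2 ⊢
  have a3 := h3 _ (ξ x v - (s _ (e _ (X.map x v)) - B.map x (s _ (e _ v))))
  have a4 : g _ (ξ x v - (s _ (e _ (X.map x v)) - B.map x (s _ (e _ v)))) = 0 := by
    simp [h2, H.hg x, a1]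
  rw [a4, map_zero, add_zero, a2, map_sub, H.hf] at a3
  rw [map_add]
  have := sub_eq_iff_eq_add.1 a3.symm
  rw [this]; abel

theorem SES.c3 (H : SES A B C f g) {X : MRep k Q} (hA : HomZ X A) (hC : HomZ X C) : HomZ X B := by
  obtain ⟨r, s, h1, h2, h3⟩ := H.split
  intro e he i v
  have g0 : ∀ i v, g i (e i v) = 0 := fun i v => hC _ (H.hg.comp he) i v
  have e0 : ∀ i v, f i (r i (e i v)) = e i v := fun i v => by
    have := h3 i (e i v); simpa [g0] using this
  have := hA (fun i => r i ∘ₗ e i) (by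
    intro x v
    apply H.inj
    simp only [LinearMap.comp_apply]
    rw [e0, H.hf, e0, he]) i v
  rw [← e0]
  simp at this
  simp [this]

theorem SES.c4 (H : SES A B C f g) {X : MRep k Q} (hB : HomZ X B) : HomZ X A := by
  intro e he i v
  apply H.inj i
  simpa using hB _ (H.hf.comp he) i v

theorem SES.lift (H : SES A B C f g) {X : MRep k Q} (hA : ExtZ X A) (φ : Fam X C) (hφ : IsHom X C φ) :
    ∃ ψ, IsHom X B ψ ∧ ∀ i v, g i (ψ i v) = φ i v := by
  obtain ⟨r, s, h1, h2, h3⟩ := H.split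
  obtain ⟨e, he⟩ := hA (fun x => r _ ∘ₗ
    ((s _ ∘ₗ φ _) ∘ₗ X.map x - B.map x ∘ₗ (s _ ∘ₗ φ _)))
  refine ⟨fun i => s i ∘ₗ φ i - f i ∘ₗ e i, fun x v => ?_, fun i v => by simp [h2, H.zero]⟩
  have a2 := congrArg (f _) (he x v)
  simp only [LinearMap.comp_apply, LinearMap.sub_apply] at a2 ⊢
  have a3 := h3 _ (s _ (φ _ (X.map x v)) - B.map x (s _ (φ _ v)))
  have a4 : g _ (s _ (φ _ (X.map x v)) - B.map x (s _ (φ _ v))) = 0 := by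
    simp [h2, H.hg x, hφ x]
  rw [a4, map_zero, add_zero, a2, map_sub, H.hf] at a3
  rw [map_sub, sub_eq_sub_iff_sub_eq_sub, a3]

theorem SES.c5 (H : SES A B C f g) {X : MRep k Q} (hB : HomZ X B) (hA : ExtZ X A) : HomZ X C := by
  intro φ hφ i v
  obtain ⟨ψ, h1, h2⟩ := H.lift hA φ hφ
  rw [← h2, hB ψ h1, map_zero]

theorem SES.c6 (H : SES A B C f g) {X : MRep k Q} (hC : HomZ X C) (hB : ExtZ X B) : ExtZ X A := by
  obtain ⟨r, s, h1, h2, h3⟩ := H.split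
  intro ξ
  obtain ⟨e, he⟩ := hB (fun x => f _ ∘ₗ ξ x)
  simp only [LinearMap.comp_apply] at he
  have g0 : ∀ i v, g i (e i v) = 0 := fun i v => hC (fun i => g i ∘ₗ e i) (by
    intro x v
    have := congrArg (g _) (he x v)
    simp only [H.zero, map_sub, H.hg x] at this
    simpa using (sub_eq_zero.1 this.symm)) i v
  have e0 : ∀ i v, f i (r i (e i v)) = e i v := fun i v => by
    have := h3 i (e i v); simpa [g0] using this
  refine ⟨fun i => r i ∘ₗ e i, fun x v => ?_⟩
  apply H.inj
  rw [he]
  simp [e0, H.hf x]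

theorem SES.d1 (H : SES A B C f g) {Y : MRep k Q} (h : ExtZ B Y) : ExtZ A Y := by
  obtain ⟨r, s, h1, h2, h3⟩ := H.split
  intro ξ
  obtain ⟨e, he⟩ := h (fun x => ξ x ∘ₗ r _)
  refine ⟨fun i => e i ∘ₗ f i, fun x v => ?_⟩
  have := he x (f _ v)
  simpa [h1, H.hf x] using this

theorem SES.d2 (H : SES A B C f g) {Y : MRep k Q} (hA : ExtZ A Y) (hC : ExtZ C Y) : ExtZ B Y := by
  obtain ⟨r, s, h1, h2, h3⟩ := H.split
  intro ξ
  obtain ⟨e, he⟩ := hA (fun x => ξ x ∘ₗ f _)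
  obtain ⟨e', he'⟩ := hC (fun x =>
    (ξ x - ((e _ ∘ₗ r _) ∘ₗ B.map x - Y.map x ∘ₗ (e _ ∘ₗ r _))) ∘ₗ s _)
  refine ⟨fun i => e i ∘ₗ r i + e' i ∘ₗ g i, fun x v => ?_⟩
  have a1 := he x (r _ v)
  have a2 := he' x (g _ v)
  have a3 := h3 _ v
  simp only [LinearMap.comp_apply, LinearMap.sub_apply, LinearMap.add_apply] at a1 a2 ⊢
  rw [← H.hg] at a2
  have a5 : s _ (g _ v) = v - f _ (r _ v) := by rw [eq_sub_iff_add_eq, add_comm]; exact a3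
  rw [a5] at a2
  simp only [map_sub, h1, sub_self, ← H.hf x, a1, map_zero, sub_zero] at a2
  simp only [map_add]
  rw [← sub_eq_zero] at a2 ⊢
  rw [← a2]
  abel

theorem SES.d3 (H : SES A B C f g) {Y : MRep k Q} (hA : HomZ A Y) (hC : HomZ C Y) : HomZ B Y := by
  obtain ⟨r, s, h1, h2, h3⟩ := H.split
  intro e he i v
  have f0 : ∀ i v, e i (f i v) = 0 := fun i v => hA _ (he.comp H.hf) i v
  have e0 : ∀ i v, e i (s i (g i v)) = e i v := fun i v => by
    have := congrArg (e i) (h3 i v); simpa [f0] using this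
  have := hC (fun i => e i ∘ₗ s i) (by
    intro x v
    obtain ⟨v, rfl⟩ := H.surj _ v
    simp only [LinearMap.comp_apply]
    rw [← H.hg, e0, e0, he]) i (g i v)
  rw [← e0]; exact this

theorem SES.d4 (H : SES A B C f g) {Y : MRep k Q} (hB : HomZ B Y) : HomZ C Y := by
  intro e he i v
  obtain ⟨v, rfl⟩ := H.surj _ v
  simpa using hB _ (he.comp H.hg) i v

theorem SES.extend (H : SES A B C f g) {Y : MRep k Q} (hC : ExtZ C Y) (φ : Fam A Y) (hφ : IsHom A Y φ) :
    ∃ ψ, IsHom B Y ψ ∧ ∀ i v, ψ i (f i v) = φ i v := by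
  obtain ⟨r, s, h1, h2, h3⟩ := H.split
  obtain ⟨e, he⟩ := hC (fun x =>
    ((φ _ ∘ₗ r _) ∘ₗ B.map x - Y.map x ∘ₗ (φ _ ∘ₗ r _)) ∘ₗ s _)
  refine ⟨fun i => φ i ∘ₗ r i - e i ∘ₗ g i, fun x v => ?_, fun i v => by simp [h1, H.zero]⟩
  have a2 := he x (g _ v)
  have a3 := h3 _ v
  simp only [LinearMap.comp_apply, LinearMap.sub_apply] at a2 ⊢
  rw [← H.hg] at a2
  have a5 : s _ (g _ v) = v - f _ (r _ v) := by rw [eq_sub_iff_add_eq, add_comm]; exact a3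
  rw [a5] at a2
  simp only [map_sub, h1, sub_self, ← H.hf x, hφ x, map_zero, sub_zero] at a2
  rw [map_sub]
  rw [← sub_eq_zero] at a2 ⊢
  rw [← a2]
  abel

theorem SES.d5 (H : SES A B C f g) {Y : MRep k Q} (hB : HomZ B Y) (hC : ExtZ C Y) : HomZ A Y := by
  intro φ hφ i v
  obtain ⟨ψ, h1, h2⟩ := H.extend hC φ hφ
  rw [← h2, hB ψ h1]

theorem SES.d6 (H : SES A B C f g) {Y : MRep k Q}
    (hA : ∀ φ, IsHom A Y φ → ∃ ψ, IsHom B Y ψ ∧ ∀ i v, ψ i (f i v) = φ i v)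
    (hB : ExtZ B Y) : ExtZ C Y := by
  obtain ⟨r, s, h1, h2, h3⟩ := H.split
  intro ξ
  obtain ⟨e, he⟩ := hB (fun x => ξ x ∘ₗ g _)
  simp only [LinearMap.comp_apply] at he
  obtain ⟨l, hl, hl'⟩ := hA (fun i => e i ∘ₗ f i) (by
    intro x v
    have := he x (f _ v)
    simp only [H.zero, map_zero, ← H.hf x] at this
    simpa using (sub_eq_zero.1 this.symm))
  simp only [LinearMap.comp_apply] at hl'
  have e0 : ∀ i v, (e i - l i) (s i (g i v)) = (e i - l i) v := fun i v => by
    have := congrArg (e i - l i) (h3 i v); simpa [hl'] using this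
  refine ⟨fun i => (e i - l i) ∘ₗ s i, fun x v => ?_⟩
  obtain ⟨v, rfl⟩ := H.surj _ v
  rw [he]
  simp only [LinearMap.comp_apply]
  rw [← H.hg, e0, e0]
  simp [hl x]

end les

/-! ### Sub, quotient, extension -/

/-- subrepresentation -/
def sub (M : MRep k Q) (S : ∀ i, Submodule k (M.V i))
    (hS : ∀ x v, v ∈ S (Q.src x) → M.map x v ∈ S (Q.tgt x)) : MRep k Q where
  V i := S i
  map x := (M.map x).restrict (hS x)

/-- quotient representation -/
def quo (M : MRep k Q) (S : ∀ i, Submodule k (M.V i))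
    (hS : ∀ x v, v ∈ S (Q.src x) → M.map x v ∈ S (Q.tgt x)) : MRep k Q where
  V i := M.V i ⧸ S i
  map x := (S (Q.src x)).mapQ (S (Q.tgt x)) (M.map x) (hS x)

theorem ses_sub (M : MRep k Q) (S : ∀ i, Submodule k (M.V i)) (hS) :
    SES (sub M S hS) M (quo M S hS) (fun i => (S i).subtype) (fun i => (S i).mkQ) where
  hf := fun x v => rfl
  hg := fun x v => rfl
  inj := fun i => (S i).injective_subtype
  surj := fun i => (S i).mkQ_surjective
  zero := fun i a => by
    have := a.2
    exact (Submodule.Quotient.mk_eq_zero _).2 this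
  ex := fun i b hb => ⟨⟨b, (Submodule.Quotient.mk_eq_zero _).1 hb⟩, rfl⟩

theorem ker_stable {M N : MRep k Q} {f : Fam M N} (hf : IsHom M N f) :
    ∀ x v, v ∈ LinearMap.ker (f (Q.src x)) → M.map x v ∈ LinearMap.ker (f (Q.tgt x)) := by
  intro x v hv
  rw [LinearMap.mem_ker] at *
  rw [hf, hv, map_zero]

theorem range_stable {M N : MRep k Q} {f : Fam M N} (hf : IsHom M N f) :
    ∀ x v, v ∈ LinearMap.range (f (Q.src x)) → N.map x v ∈ LinearMap.range (f (Q.tgt x)) := by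
  rintro x _ ⟨v, rfl⟩
  exact ⟨M.map x v, hf x v⟩

/-- kernel -/
def kerR {M N : MRep k Q} (f : Fam M N) (hf : IsHom M N f) : MRep k Q :=
  sub M (fun i => LinearMap.ker (f i)) (ker_stable hf)

/-- image -/
def imR {M N : MRep k Q} (f : Fam M N) (hf : IsHom M N f) : MRep k Q :=
  sub N (fun i => LinearMap.range (f i)) (range_stable hf)

/-- cokernel -/
def cokR {M N : MRep k Q} (f : Fam M N) (hf : IsHom M N f) : MRep k Q :=
  quo N (fun i => LinearMap.range (f i)) (range_stable hf)

theorem ses_ker {M N : MRep k Q} (f : Fam M N) (hf : IsHom M N f) :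
    SES (kerR f hf) M (imR f hf) (fun i => (LinearMap.ker (f i)).subtype)
      (fun i => (f i).rangeRestrict) where
  hf := fun x v => rfl
  hg := fun x v => Subtype.ext (hf x v)
  inj := fun i => Submodule.injective_subtype _
  surj := fun i => (f i).surjective_rangeRestrict
  zero := fun i a => Subtype.ext a.2
  ex := fun i b hb => ⟨⟨b, congrArg Subtype.val hb⟩, rfl⟩

theorem ses_cok {M N : MRep k Q} (f : Fam M N) (hf : IsHom M N f) :
    SES (imR f hf) N (cokR f hf) (fun i => (LinearMap.range (f i)).subtype)
      (fun i => (LinearMap.range (f i)).mkQ) := ses_sub _ _ _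

/-- the extension of `C` by `A` given by a cocycle -/
def extR (A C : MRep k Q) (ξ : ∀ x : Fin Q.a, C.V (Q.src x) →ₗ[k] A.V (Q.tgt x)) :
    MRep k Q where
  V i := A.V i × C.V i
  map x := ((A.map x).coprod (ξ x)).prod (C.map x ∘ₗ LinearMap.snd k _ _)

theorem ses_ext (A C : MRep k Q) (ξ) :
    SES A (extR A C ξ) C (fun i => LinearMap.inl k (A.V i) (C.V i))
      (fun i => LinearMap.snd k (A.V i) (C.V i)) where
  hf := fun x v => by
    change (A.map x v, (0 : C.V _)) = (A.map x v + ξ x 0, C.map x 0)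
    simp
  hg := fun x v => rfl
  inj := fun i => LinearMap.inl_injective
  surj := fun i => LinearMap.snd_surjective
  zero := fun i a => rfl
  ex := fun i b hb => ⟨b.1, Prod.ext rfl hb.symm⟩

/-- the zero representation -/
def zeroR : MRep k Q where
  V _ := PUnit
  map _ := 0

theorem perp_zero (V : MRep k Q) : Perp V zeroR :=
  ⟨fun _ _ _ _ => rfl, fun _ => ⟨fun _ => 0, fun _ _ => rfl⟩⟩

/-- wide subcategories -/
structure Wide (P : MRep k Q → Prop) : Prop where
  zero : P zeroR
  ses1 : ∀ {A B C f g}, SES A B C f g → P A → P B → P C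
  ses2 : ∀ {A B C f g}, SES A B C f g → P A → P C → P B
  ses3 : ∀ {A B C f g}, SES A B C f g → P B → P C → P A
  im : ∀ {A B f} (hf : IsHom A B f), P A → P B → P (imR f hf)

theorem Wide.ker {P : MRep k Q → Prop} (hP : Wide P) {A B f} (hf : IsHom A B f)
    (hA : P A) (hB : P B) : P (kerR f hf) := hP.ses3 (ses_ker f hf) hA (hP.im hf hA hB)

theorem Wide.cok {P : MRep k Q → Prop} (hP : Wide P) {A B f} (hf : IsHom A B f)
    (hA : P A) (hB : P B) : P (cokR f hf) := hP.ses1 (ses_cok f hf) (hP.im hf hA hB) hB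

theorem wide_perp (V : MRep k Q) : Wide (Perp V) where
  zero := perp_zero V
  ses1 := fun H hA hB => ⟨H.c5 hB.1 hA.2, H.c1 hB.2⟩
  ses2 := fun H hA hC => ⟨H.c3 hA.1 hC.1, H.c2 hA.2 hC.2⟩
  ses3 := fun H hB hC => ⟨H.c4 hB.1, H.c6 hC.1 hB.2⟩
  im := fun {_ _ f} hf hA hB => ⟨(ses_cok f hf).c4 hB.1, (ses_ker f hf).c1 hA.2⟩

theorem Wide.and {P P' : MRep k Q → Prop} (h : Wide P) (h' : Wide P') :
    Wide (fun M => P M ∧ P' M) where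
  zero := ⟨h.zero, h'.zero⟩
  ses1 := fun H hA hB => ⟨h.ses1 H hA.1 hB.1, h'.ses1 H hA.2 hB.2⟩
  ses2 := fun H hA hB => ⟨h.ses2 H hA.1 hB.1, h'.ses2 H hA.2 hB.2⟩
  ses3 := fun H hA hB => ⟨h.ses3 H hA.1 hB.1, h'.ses3 H hA.2 hB.2⟩
  im := fun hf hA hB => ⟨h.im hf hA.1 hB.1, h'.im hf hA.2 hB.2⟩

/-! ### Universal objects -/

/-- total dimension -/
noncomputable def td (M : MRep k Q) : ℕ := ∑ i, Module.finrank k (M.V i)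

theorem td_le_of_inj {M N : MRep k Q} (f : Fam M N) (hf : ∀ i, Function.Injective (f i)) :
    td M ≤ td N :=
  Finset.sum_le_sum fun i _ => LinearMap.finrank_le_finrank_of_injective (hf i)

theorem td_le_of_surj {M N : MRep k Q} (f : Fam M N) (hf : ∀ i, Function.Surjective (f i)) :
    td N ≤ td M :=
  Finset.sum_le_sum fun i _ => LinearMap.finrank_le_finrank_of_surjective (hf i)

theorem surj_of_inj {M N : MRep k Q} (f : Fam M N) (hf : ∀ i, Function.Injective (f i))
    (h : td N ≤ td M) : ∀ i, Function.Surjective (f i) := by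
  have h1 : ∀ i ∈ Finset.univ, Module.finrank k (M.V i) ≤ Module.finrank k (N.V i) :=
    fun i _ => LinearMap.finrank_le_finrank_of_injective (hf i)
  have h2 := (Finset.sum_eq_sum_iff_of_le h1).1 (le_antisymm (Finset.sum_le_sum h1) h)
  intro i
  exact (LinearMap.injective_iff_surjective_of_finrank_eq_finrank
    (h2 i (Finset.mem_univ i))).1 (hf i)

theorem inj_of_surj {M N : MRep k Q} (f : Fam M N) (hf : ∀ i, Function.Surjective (f i))
    (h : td M ≤ td N) : ∀ i, Function.Injective (f i) := by
  have h1 : ∀ i ∈ Finset.univ, Module.finrank k (N.V i) ≤ Module.finrank k (M.V i) :=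
    fun i _ => LinearMap.finrank_le_finrank_of_surjective (hf i)
  have h2 := (Finset.sum_eq_sum_iff_of_le h1).1 (le_antisymm (Finset.sum_le_sum h1) h)
  intro i
  exact (LinearMap.injective_iff_surjective_of_finrank_eq_finrank
    (h2 i (Finset.mem_univ i)).symm).2 (hf i)

/-- `m` generates `M` inside `P`. -/
def Gen (P : MRep k Q → Prop) (M : MRep k Q) (m : ∀ i, M.V i) : Prop :=
  ∀ (N : MRep k Q) (j : Fam N M) (n : ∀ i, N.V i), P N → IsHom N M j →
    (∀ i, Function.Injective (j i)) → (∀ i, j i (n i) = m i) → td M ≤ td N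

theorem Gen.unique {P : MRep k Q → Prop} (hP : Wide P) {M : MRep k Q} {m : ∀ i, M.V i}
    (hM : P M) (hm : Gen P M m) {N : MRep k Q} (hN : P N) {f g : Fam M N}
    (hf : IsHom M N f) (hg : IsHom M N g) (h : ∀ i, f i (m i) = g i (m i)) : f = g := by
  have hd := hf.sub hg
  have S := ses_ker _ hd
  have h1 := hm (kerR _ hd) _ (fun i => ⟨m i, by simp [h]⟩) (hP.ker hd hM hN) S.hf S.inj
    (fun i => rfl)
  have h2 := surj_of_inj _ S.inj h1
  funext i
  ext v
  obtain ⟨w, hw⟩ := h2 i v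
  have := w.2
  rw [← hw]
  exact sub_eq_zero.1 this

/-- universal pairs -/
structure Univ (P : MRep k Q → Prop) (B : MRep k Q) (b : ∀ i, B.V i) : Prop where
  mem : P B
  ex : ∀ (M : MRep k Q) (m : ∀ i, M.V i), P M → ∃ f, IsHom B M f ∧ ∀ i, f i (b i) = m i
  uniq : ∀ {M : MRep k Q} {f g : Fam B M}, P M → IsHom B M f → IsHom B M g →
    (∀ i, f i (b i) = g i (b i)) → f = g

theorem exists_gen {P : MRep k Q → Prop} (M : MRep k Q) (m : ∀ i, M.V i) (hM : P M) :
    ∃ (N : MRep k Q) (j : Fam N M) (n : ∀ i, N.V i), P N ∧ IsHom N M j ∧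
      (∀ i, j i (n i) = m i) ∧ Gen P N n := by
  classical
  let p : ℕ → Prop := fun t => ∃ (N : MRep k Q) (j : Fam N M) (n : ∀ i, N.V i),
    P N ∧ IsHom N M j ∧ (∀ i, Function.Injective (j i)) ∧ (∀ i, j i (n i) = m i) ∧ td N = t
  have hp : ∃ t, p t := ⟨td M, M, fun _ => LinearMap.id, m, hM, IsHom.id M,
    fun i => Function.injective_id, fun i => rfl, rfl⟩
  obtain ⟨N, j, n, h1, h2, h3, h4, h5⟩ := Nat.find_spec hp
  refine ⟨N, j, n, h1, h2, h4, ?_⟩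
  intro N' j' n' a1 a2 a3 a4
  rw [h5]
  apply Nat.find_min'
  exact ⟨N', fun i => j i ∘ₗ j' i, n', a1, h2.comp a2, fun i => (h3 i).comp (a3 i),
    fun i => by simp [a4, h4], rfl⟩

theorem exists_univ {P : MRep k Q → Prop} (hP : Wide P) (T : ℕ)
    (hT : ∀ M m, P M → Gen P M m → td M ≤ T) : ∃ B b, Univ P B b := by
  classical
  let p : ℕ → Prop := fun t => ∃ B b, P B ∧ Gen P B b ∧ td B = t
  have hp : ∃ t, t ≤ T ∧ p t := by
    obtain ⟨N, j, n, h1, h2, h3, h4⟩ := exists_gen (P := P) zeroR (fun _ => 0) hP.zero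
    exact ⟨td N, hT N n h1 h4, N, n, h1, h4, rfl⟩
  obtain ⟨t, ht, hpt⟩ := hp
  obtain ⟨B, b, hB, hb, hBt⟩ := Nat.findGreatest_spec ht hpt
  have hmax : ∀ N n, P N → Gen P N n → td N ≤ td B := by
    intro N n h1 h2
    rw [hBt]
    exact Nat.le_findGreatest (hT N n h1 h2) ⟨N, n, h1, h2, rfl⟩
  refine ⟨B, b, hB, ?_, fun hM hf hg h => hb.unique hP hB hM hf hg h⟩
  intro M m hM
  have S := ses_ext M B (fun _ => 0)
  obtain ⟨N, j, n, h1, h2, h3, h4⟩ :=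
    exists_gen (P := P) (extR M B (fun _ => 0)) (fun i => (m i, b i)) (hP.ses2 S hM hB)
  have hq := S.hg.comp h2
  have hI := ses_cok _ hq
  have hI' := ses_ker _ hq
  have e1 := hb (imR _ hq) _ (fun i => ⟨b i, n i, by
    change (j i (n i)).2 = _
    rw [h3]⟩) (hP.im hq h1 hB) hI.hf hI.inj (fun i => rfl)
  have e2 := surj_of_inj _ hI.inj e1
  have e3 : ∀ i, Function.Surjective (LinearMap.snd k (M.V i) (B.V i) ∘ₗ j i) := by
    intro i v
    obtain ⟨w, hw⟩ := e2 i v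
    obtain ⟨u, hu⟩ := w.2
    exact ⟨u, by rw [← hw]; exact hu⟩
  have e4 := inj_of_surj _ e3 (hmax N n h1 h4)
  let E : ∀ i, N.V i ≃ₗ[k] B.V i := fun i => LinearEquiv.ofBijective _ ⟨e4 i, e3 i⟩
  have hE : ∀ i v, E i v = (j i v).2 := fun i v => rfl
  let F : Fam B M := fun i => LinearMap.fst k (M.V i) (B.V i) ∘ₗ j i ∘ₗ (E i).symm.toLinearMap
  have hF : ∀ i v, F i (E i v) = (j i v).1 := by
    intro i v
    change (j i ((E i).symm (E i v))).1 = _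
    rw [LinearEquiv.symm_apply_apply]
  refine ⟨F, ?_, ?_⟩
  · intro x v
    obtain ⟨w, rfl⟩ := (E _).surjective v
    have a1 : B.map x (E _ w) = E _ (N.map x w) := (hq x w).symm
    rw [a1, hF, hF, h2]
    change M.map x (j _ w).1 + 0 = _
    rw [add_zero]
  · intro i
    have a1 : b i = E i (n i) := by rw [hE, h3]
    rw [a1, hF, h3]

theorem Univ.proj {P : MRep k Q → Prop} (hP : Wide P) {B : MRep k Q} {b} (hB : Univ P B b)
    {N : MRep k Q} (hN : P N) : ExtZ B N := by
  intro ξ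
  have S := ses_ext N B ξ
  obtain ⟨f, hf, hfb⟩ := hB.ex (extR N B ξ) (fun i => (0, b i)) (hP.ses2 S hN hB.mem)
  have h1 := hB.uniq hB.mem (S.hg.comp hf) (IsHom.id B) (fun i => by
    change (f i (b i)).2 = _
    rw [hfb]; rfl)
  have h2 : ∀ i v, (f i v).2 = v := fun i v => LinearMap.congr_fun (congrFun h1 i) v
  refine ⟨fun i => LinearMap.fst k (N.V i) (B.V i) ∘ₗ f i, fun x v => ?_⟩
  have h3 : (f _ (B.map x v)).1 = N.map x (f _ v).1 + ξ x (f _ v).2 :=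
    congrArg Prod.fst (hf x v)
  rw [h2] at h3
  exact eq_sub_of_add_eq' h3.symm

/-! ### Combining rigid representations -/

theorem perp_extR {A C M : MRep k Q} (ξ) (hC : Perp C M) : Perp (extR A C ξ) M ↔ Perp A M := by
  have S := ses_ext A C ξ
  exact ⟨fun h => ⟨S.d5 h.1 hC.2, S.d1 h.2⟩, fun h => ⟨S.d3 h.1 hC.1, S.d2 h.2 hC.2⟩⟩

/-- the linear map with kernel Hom and cokernel Ext -/
def dmap (M N : MRep k Q) :
    Fam M N →ₗ[k] (∀ x : Fin Q.a, M.V (Q.src x) →ₗ[k] N.V (Q.tgt x)) where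
  toFun f := fun x => f (Q.tgt x) ∘ₗ M.map x - N.map x ∘ₗ f (Q.src x)
  map_add' := by
    intro f g; funext x; ext v
    simp; abel
  map_smul' := by
    intro c f; funext x; ext v
    simp [smul_sub]

theorem extZ_iff (M N : MRep k Q) : ExtZ M N ↔ LinearMap.range (dmap M N) = ⊤ := by
  rw [LinearMap.range_eq_top]
  constructor
  · intro h ξ
    obtain ⟨e, he⟩ := h ξ
    exact ⟨e, by funext x; ext v; exact (he x v).symm⟩
  · intro h ξ
    obtain ⟨e, he⟩ := h ξ
    exact ⟨e, fun x v => by rw [← he]; rfl⟩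

theorem mem_ker_dmap (M N : MRep k Q) (f) : f ∈ LinearMap.ker (dmap M N) ↔ IsHom M N f := by
  rw [LinearMap.mem_ker]
  constructor
  · intro h x v
    exact sub_eq_zero.1 (LinearMap.congr_fun (congrFun h x) v)
  · intro h
    funext x; ext v
    exact sub_eq_zero.2 (h x v)

theorem homZ_iff (M N : MRep k Q) : HomZ M N ↔ LinearMap.ker (dmap M N) = ⊥ := by
  rw [eq_bot_iff]
  constructor
  · intro h f hf
    rw [mem_ker_dmap] at hf
    rw [Submodule.mem_bot]
    funext i; ext v; exact h f hf i v
  · intro h f hf i v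
    have := h ((mem_ker_dmap M N f).2 hf)
    rw [Submodule.mem_bot] at this
    rw [this]; rfl

/-- codimension measuring Ext -/
noncomputable def edim (M N : MRep k Q) : ℕ := Module.finrank k
  ((∀ x : Fin Q.a, M.V (Q.src x) →ₗ[k] N.V (Q.tgt x)) ⧸ LinearMap.range (dmap M N))

theorem edim_lt {E B C X : MRep k Q} {f : Fam E B} {g : Fam B C} (H : SES E B C f g)
    (hC : ExtZ X C) {ξ : ∀ x : Fin Q.a, X.V (Q.src x) →ₗ[k] E.V (Q.tgt x)}
    (hξ : ξ ∉ LinearMap.range (dmap X E))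
    (hb : ∃ h : Fam X B, ∀ x v, h _ (X.map x v) - B.map x (h _ v) = f _ (ξ x v)) :
    edim X B < edim X E := by
  obtain ⟨r, s, h1, h2, h3⟩ := H.split
  let ι : (∀ x : Fin Q.a, X.V (Q.src x) →ₗ[k] E.V (Q.tgt x)) →ₗ[k]
      (∀ x : Fin Q.a, X.V (Q.src x) →ₗ[k] B.V (Q.tgt x)) :=
    { toFun := fun η x => f _ ∘ₗ η x
      map_add' := by
        intro a b; funext x; rw [Pi.add_apply, LinearMap.comp_add]; rfl
      map_smul' := by
        intro c b; funext x; rw [Pi.smul_apply, LinearMap.comp_smul]; rfl }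
  have hι : LinearMap.range (dmap X E) ≤ (LinearMap.range (dmap X B)).comap ι := by
    rintro _ ⟨h, rfl⟩
    refine ⟨fun i => f i ∘ₗ h i, ?_⟩
    funext x; ext v
    change f _ (h _ (X.map x v)) - B.map x (f _ (h _ v)) = f _ (h _ (X.map x v) - E.map x (h _ v))
    rw [← H.hf, map_sub]
  let F := Submodule.mapQ _ _ ι hι
  have hF : Function.Surjective F := by
    intro y
    obtain ⟨η, rfl⟩ := Submodule.mkQ_surjective _ y
    obtain ⟨h, hh⟩ := hC (fun x => g _ ∘ₗ η x)
    simp only [LinearMap.comp_apply] at hh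
    refine ⟨Submodule.mkQ _ (fun x =>
      r _ ∘ₗ (η x - dmap X B (fun i => s i ∘ₗ h i) x)), ?_⟩
    change Submodule.mkQ _ (ι _) = _
    rw [← sub_eq_zero, ← map_sub]
    refine (Submodule.Quotient.mk_eq_zero _).2 ⟨-(fun i => s i ∘ₗ h i), ?_⟩
    rw [map_neg]
    funext x; ext v
    have hd : dmap X B (fun i => s i ∘ₗ h i) x v =
      s _ (h _ (X.map x v)) - B.map x (s _ (h _ v)) := rfl
    have a4 : g _ (η x v - dmap X B (fun i => s i ∘ₗ h i) x v) = 0 := by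
      rw [hd, map_sub, map_sub, h2, H.hg, h2, hh, sub_self]
    have a3 := h3 _ (η x v - dmap X B (fun i => s i ∘ₗ h i) x v)
    rw [a4, map_zero, add_zero] at a3
    change - (dmap X B (fun i => s i ∘ₗ h i) x v) =
      f _ (r _ (η x v - dmap X B (fun i => s i ∘ₗ h i) x v)) - η x v
    rw [a3]; abel
  by_contra hcon
  have heq : edim X B = edim X E :=
    le_antisymm (LinearMap.finrank_le_finrank_of_surjective hF) (not_lt.1 hcon)
  have hFi := (LinearMap.injective_iff_surjective_of_finrank_eq_finrank heq.symm).2 hF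
  have h5 : F (Submodule.mkQ _ ξ) = 0 := by
    change Submodule.mkQ _ (ι ξ) = _
    obtain ⟨h, hh⟩ := hb
    refine (Submodule.Quotient.mk_eq_zero _).2 ⟨h, ?_⟩
    funext x; ext v
    exact hh x v
  have h6 : Submodule.mkQ _ ξ = 0 := hFi (by rw [h5, map_zero])
  exact hξ ((Submodule.Quotient.mk_eq_zero _).1 h6)

theorem glue_aux {K C : MRep k Q} (hK : ExtZ K K) (hC : ExtZ C C) (hKC : ExtZ K C) :
    ∀ (t : ℕ) (E : MRep k Q), edim C E ≤ t → ExtZ K E → ExtZ E C →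
      (∀ N, ExtZ K N → ExtZ C N → ExtZ E N) →
      (∀ M, Perp C M → (Perp E M ↔ Perp K M)) →
      ∃ E' : MRep k Q, ExtZ C E' ∧ ExtZ K E' ∧ ExtZ E' C ∧
        (∀ N, ExtZ K N → ExtZ C N → ExtZ E' N) ∧
        (∀ M, Perp C M → (Perp E' M ↔ Perp K M)) := by
  intro t
  induction t with
  | zero =>
    intro E h0 h1 h2 h3 h4
    refine ⟨E, ?_, h1, h2, h3, h4⟩
    rw [extZ_iff]
    rw [Nat.le_zero] at h0
    exact Submodule.Quotient.subsingleton_iff.1 (Module.finrank_zero_iff.1 h0)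
  | succ t ih =>
    intro E h0 h1 h2 h3 h4
    by_cases hz : ExtZ C E
    · exact ⟨E, hz, h1, h2, h3, h4⟩
    · rw [extZ_iff] at hz
      obtain ⟨ξ, hξ⟩ : ∃ ξ, ξ ∉ LinearMap.range (dmap C E) := by
        by_contra! h
        exact hz (eq_top_iff.2 fun ξ _ => h ξ)
      have S := ses_ext E C ξ
      refine ih (extR E C ξ) ?_ (S.c2 h1 hKC) (S.d2 h2 hC)
        (fun N a b => S.d2 (h3 N a b) b)
        (fun M hM => (perp_extR ξ hM).trans (h4 M hM))
      -- the induced map on Ext is surjective and kills the class of `ξ`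
      have hlt : edim C (extR E C ξ) < edim C E := by
        refine edim_lt S hC hξ ⟨fun i => -LinearMap.inr k (E.V i) (C.V i), ?_⟩
        intro x v
        apply Prod.ext
        · change -(0 : E.V _) - (E.map x (-(0 : E.V _)) + ξ x (- v)) = ξ x v
          simp
        · change - (C.map x v) - C.map x (- v) = 0
          simp
      omega

theorem glue {K C : MRep k Q} (hK : ExtZ K K) (hC : ExtZ C C) (hKC : ExtZ K C) :
    ∃ V : MRep k Q, ExtZ V V ∧ (∀ N, ExtZ K N → ExtZ C N → ExtZ V N) ∧
      ∀ M, Perp V M ↔ Perp K M ∧ Perp C M := by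
  obtain ⟨E, h1, h2, h3, h4, h5⟩ := glue_aux hK hC hKC _ K le_rfl hK hKC (fun _ h _ => h)
    (fun _ _ => Iff.rfl)
  have S := ses_ext E C (fun _ => 0)
  have h6 : ∀ N, ExtZ K N → ExtZ C N → ExtZ (extR E C (fun _ => 0)) N :=
    fun N a b => S.d2 (h4 N a b) b
  refine ⟨extR E C (fun _ => 0), h6 _ (S.c2 h2 hKC) (S.c2 h1 hC), h6, fun M => ?_⟩
  constructor
  · intro h
    have hCM : Perp C M := by
      refine ⟨S.d4 h.1, ?_⟩
      refine S.d6 (fun φ hφ => ⟨fun i => φ i ∘ₗ LinearMap.fst k (E.V i) (C.V i), ?_, ?_⟩) h.2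
      · intro x v
        change φ _ (E.map x v.1 + 0) = _
        rw [add_zero, hφ]; rfl
      · intro i v
        rfl
    exact ⟨(h5 M hCM).1 ((perp_extR _ hCM).1 h), hCM⟩
  · rintro ⟨h, hCM⟩
    exact (perp_extR _ hCM).2 ((h5 M hCM).2 h)

/-! ### The main construction -/

theorem SES.descend {A B C Y : MRep k Q} {f : Fam A B} {g : Fam B C} (H : SES A B C f g)
    {e : Fam B Y} (he : IsHom B Y e) (f0 : ∀ i v, e i (f i v) = 0) :
    ∃ e' : Fam C Y, IsHom C Y e' ∧ ∀ i v, e' i (g i v) = e i v := by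
  obtain ⟨r, s, h1, h2, h3⟩ := H.split
  have e0 : ∀ i v, e i (s i (g i v)) = e i v := fun i v => by
    have := congrArg (e i) (h3 i v); simpa [f0] using this
  refine ⟨fun i => e i ∘ₗ s i, ?_, e0⟩
  intro x v
  obtain ⟨v, rfl⟩ := H.surj _ v
  simp only [LinearMap.comp_apply]
  rw [← H.hg, e0, e0, he]

theorem Wide.factor {P : MRep k Q → Prop} (hP : Wide P) {A B : MRep k Q} {φ : Fam A B}
    (hφ : IsHom A B φ) (hA : P A) (hB : P B) :
    ∃ (K I C : MRep k Q) (ι : Fam K A) (p : Fam A I) (j : Fam I B) (c : Fam B C),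
      SES K A I ι p ∧ SES I B C j c ∧ (∀ i v, j i (p i v) = φ i v) ∧ P K ∧ P I ∧ P C :=
  ⟨_, _, _, _, _, _, _, ses_ker φ hφ, ses_cok φ hφ, fun _ _ => rfl, hP.ker hφ hA hB,
    hP.im hφ hA hB, hP.cok hφ hA hB⟩

theorem main_aux (V₁ V₂ : MRep k Q) (h₁ : ExtZ V₁ V₁)
    {BU BW : MRep k Q} {u : ∀ i, BU.V i} {w : ∀ i, BW.V i}
    (hU : Univ (Perp V₁) BU u) (hW : Univ (fun M => Perp V₁ M ∧ Perp V₂ M) BW w) :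
    ∃ V₃ : MRep k Q, ExtZ V₃ V₃ ∧ ∀ M, Perp V₃ M ↔ Perp V₁ M ∧ Perp V₂ M := by
  have wU := wide_perp V₁
  have wW := wU.and (wide_perp V₂)
  obtain ⟨φ, hφ, hφu⟩ := hU.ex BW w hW.mem.1
  obtain ⟨K, I, C, ι, p, j, c, SK, SC, hjp, mK, mI, mC⟩ := wU.factor hφ hU.mem hW.mem.1
  have pK : ∀ N, Perp V₁ N → ExtZ K N := fun N hN => SK.d1 (hU.proj wU hN)
  -- maps from `BU` to an object of `W` factor through `BW`
  have hfac : ∀ M, (Perp V₁ M ∧ Perp V₂ M) → ∀ f, IsHom BU M f →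
      ∃ e, IsHom BW M e ∧ ∀ i v, e i (j i (p i v)) = f i v := by
    intro M hM f hf
    obtain ⟨e, he, hew⟩ := hW.ex M (fun i => f i (u i)) hM
    refine ⟨e, he, fun i v => ?_⟩
    have := hU.uniq hM.1 (he.comp hφ) hf (fun i => by simp [hφu, hew])
    rw [hjp]
    exact LinearMap.congr_fun (congrFun this i) v
  have CW : ∀ M, (Perp V₁ M ∧ Perp V₂ M) → Perp C M := by
    intro M hM
    constructor
    · intro f hf i v
      obtain ⟨v, rfl⟩ := SC.surj i v
      have := hW.uniq hM (hf.comp SC.hg) (g := fun _ => 0) (fun x v => by simp) (fun i => by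
        rw [← hφu, ← hjp]
        simp [SC.zero])
      exact LinearMap.congr_fun (congrFun this i) v
    · refine SC.d6 ?_ (hW.proj wW hM)
      intro f hf
      obtain ⟨e, he, he'⟩ := hfac M hM _ (hf.comp SK.hg)
      refine ⟨e, he, fun i v => ?_⟩
      obtain ⟨v, rfl⟩ := SK.surj i v
      exact he' i v
  have KW : ∀ M, (Perp V₁ M ∧ Perp V₂ M) → Perp K M := by
    intro M hM
    refine ⟨?_, pK M hM.1⟩
    intro f hf i v
    obtain ⟨g, hg, hg'⟩ := SK.extend (SC.d1 (hW.proj wW hM)) f hf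
    obtain ⟨e, he, he'⟩ := hfac M hM g hg
    rw [← hg', ← he', SK.zero, map_zero, map_zero]
  have rC : ExtZ C C := SC.c1 (CW _ hW.mem).2
  -- objects of the triple perpendicular category
  let S : MRep k Q → Prop := fun M => Perp V₁ M ∧ Perp K M ∧ Perp C M
  have wS : Wide S := wU.and ((wide_perp _).and (wide_perp _))
  have hWS : ∀ M, (Perp V₁ M ∧ Perp V₂ M) → S M := fun M hM => ⟨hM.1, KW M hM, CW M hM⟩
  have hel : ∀ M, S M → ∀ m : ∀ i, M.V i, ∃ e, IsHom BW M e ∧ ∀ i, e i (w i) = m i := by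
    intro M hM m
    obtain ⟨f, hf, hfu⟩ := hU.ex M m hM.1
    obtain ⟨f', hf', hff'⟩ := SK.descend hf (hM.2.1.1 _ (hf.comp SK.hf))
    obtain ⟨e, he, he'⟩ := SC.extend hM.2.2.2 f' hf'
    exact ⟨e, he, fun i => by rw [← hφu, ← hjp, he', hff', hfu]⟩
  have hquot : ∀ M, S M → ∃ N f, (Perp V₁ N ∧ Perp V₂ N) ∧ IsHom N M f ∧
      ∀ i, Function.Surjective (f i) := by
    classical
    intro M hM
    let p : ℕ → Prop := fun t => ∃ (N : MRep k Q) (f : Fam N M) (hf : IsHom N M f),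
      (Perp V₁ N ∧ Perp V₂ N) ∧ td (imR f hf) = t
    have hle : ∀ (N : MRep k Q) (f : Fam N M) (hf : IsHom N M f), td (imR f hf) ≤ td M :=
      fun N f hf => td_le_of_inj _ (ses_cok f hf).inj
    have hz : IsHom (zeroR : MRep k Q) M (fun _ => 0) := fun x v => by simp
    obtain ⟨N, f, hf, hN, hNt⟩ : p (Nat.findGreatest p (td M)) :=
      Nat.findGreatest_spec (hle zeroR _ hz) ⟨zeroR, _, hz, wW.zero, rfl⟩
    refine ⟨N, f, hN, hf, ?_⟩
    intro i v
    obtain ⟨e, he, hew⟩ := hel M hM (Pi.single i v)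
    have T := ses_ext N BW (fun _ => 0)
    have hc : IsHom (extR N BW (fun _ => 0)) M (fun i => (f i).coprod (e i)) := by
      intro x v
      change f _ (N.map x v.1 + 0) + e _ (BW.map x v.2) = M.map x (f _ v.1 + e _ v.2)
      rw [add_zero, hf, he, map_add]
    have hm : td (imR _ hc) ≤ td (imR f hf) := by
      rw [hNt]
      exact Nat.le_findGreatest (hle _ _ hc) ⟨_, _, hc, wW.ses2 T hN hW.mem, rfl⟩
    have hsub : ∀ i, LinearMap.range (f i) ≤ LinearMap.range ((f i).coprod (e i)) := by
      rintro i _ ⟨v, rfl⟩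
      exact ⟨(v, 0), by simp⟩
    have hs := surj_of_inj (M := imR f hf) (N := imR _ hc)
      (fun i => Submodule.inclusion (hsub i)) (fun i => Submodule.inclusion_injective _) hm
    obtain ⟨⟨y, z, hz⟩, hy⟩ := hs i ⟨v, (0, w i), by
      change f i 0 + e i (w i) = v
      rw [map_zero, hew, zero_add, Pi.single_eq_same]⟩
    have : y = v := congrArg Subtype.val hy
    exact ⟨z, hz.trans this⟩
  have hSW : ∀ M, S M → Perp V₁ M ∧ Perp V₂ M := by
    intro M hM
    obtain ⟨N, f, hN, hf, hfs⟩ := hquot M hM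
    have T := ses_ker f hf
    obtain ⟨N', f', hN', hf', hfs'⟩ := hquot (kerR f hf) (wS.ker hf (hWS N hN) hM)
    have hg := T.hf.comp hf'
    have T' := ses_cok _ hg
    refine wW.ses1 (A := imR _ hg) (B := N) (C := M)
      (f := fun i => (LinearMap.range _).subtype) (g := f) ?_ (wW.im hg hN' hN) hN
    refine ⟨T'.hf, hf, T'.inj, hfs, ?_, ?_⟩
    · rintro i ⟨_, y, rfl⟩
      exact (f' i y).2
    · intro i b hb
      obtain ⟨y, hy⟩ := hfs' i ⟨b, hb⟩
      exact ⟨⟨b, y, congrArg Subtype.val hy⟩, rfl⟩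
  obtain ⟨K', a1, a2, a3⟩ := glue h₁ (pK _ mK) mK.2
  obtain ⟨V, b1, b2, b3⟩ := glue a1 rC (a2 _ mC.2 (pK _ mC))
  refine ⟨V, b1, fun M => ?_⟩
  rw [b3, a3, and_assoc]
  exact ⟨hSW M, hWS M⟩

/-! ### Euler form -/

/-- dimension vector -/
noncomputable def dv (M : MRep k Q) : Fin Q.n → ℤ := fun i => (Module.finrank k (M.V i) : ℤ)

theorem euler_eq (M N : MRep k Q) : Q.euler M.dv N.dv =
    (Module.finrank k (Fam M N) : ℤ) -
      Module.finrank k (∀ x : Fin Q.a, M.V (Q.src x) →ₗ[k] N.V (Q.tgt x)) := by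
  simp only [Fam, Module.finrank_pi_fintype, Module.finrank_linearMap]
  simp [FinQuiver.euler, dv]

theorem euler_le (M N : MRep k Q) :
    Q.euler M.dv N.dv ≤ Module.finrank k (LinearMap.ker (dmap M N)) := by
  rw [euler_eq]
  have h1 := LinearMap.finrank_range_add_finrank_ker (dmap M N)
  have h2 := Submodule.finrank_le (LinearMap.range (dmap M N))
  omega

theorem euler_of_extZ {M N : MRep k Q} (h : ExtZ M N) :
    Q.euler M.dv N.dv = Module.finrank k (LinearMap.ker (dmap M N)) := by
  rw [euler_eq]
  have h1 := LinearMap.finrank_range_add_finrank_ker (dmap M N)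
  rw [(extZ_iff M N).1 h, finrank_top] at h1
  omega

theorem euler_of_homZ {M N : MRep k Q} (h : HomZ M N) : Q.euler M.dv N.dv ≤ 0 := by
  have := euler_le M N
  rw [(homZ_iff M N).1 h, finrank_bot] at this
  simpa using this

theorem euler_of_perp {M N : MRep k Q} (h : Perp M N) : Q.euler M.dv N.dv = 0 := by
  rw [euler_of_extZ h.2, (homZ_iff M N).1 h.1, finrank_bot]; rfl

theorem extZ_of_homZ {M N : MRep k Q} (h : HomZ M N) (h0 : Q.euler M.dv N.dv = 0) :
    ExtZ M N := by
  rw [extZ_iff]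
  rw [euler_eq] at h0
  have h1 := LinearMap.finrank_range_add_finrank_ker (dmap M N)
  rw [(homZ_iff M N).1 h, finrank_bot] at h1
  apply Submodule.eq_top_of_finrank_eq
  omega

theorem gen_bound {P : MRep k Q → Prop} (hP : Wide P) {M : MRep k Q} {m} (hM : P M)
    (hm : Gen P M m) : Q.euler M.dv M.dv ≤ ∑ i, M.dv i := by
  refine (euler_le M M).trans ?_
  have hs : (∑ i, M.dv i) = ((Module.finrank k (∀ i, M.V i) : ℕ) : ℤ) := by
    rw [Module.finrank_pi_fintype]
    simp [dv]
  rw [hs]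
  let ev : Fam M M →ₗ[k] (∀ i, M.V i) :=
    { toFun := fun f i => f i (m i)
      map_add' := fun f g => rfl
      map_smul' := fun c f => rfl }
  have := LinearMap.finrank_le_finrank_of_injective
    (f := ev ∘ₗ (LinearMap.ker (dmap M M)).subtype) (by
      intro f g h
      apply Subtype.ext
      exact hm.unique hP hM hM ((mem_ker_dmap M M _).1 f.2) ((mem_ker_dmap M M _).1 g.2)
        (fun i => congrFun h i))
  exact_mod_cast this

theorem main (V₁ V₂ : MRep k Q) (h₁ : ExtZ V₁ V₁) (y : Fin Q.n → ℤ)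
    (hy : ∀ M, Perp V₁ M → Q.euler y M.dv = 0) (T : ℕ)
    (hT : ∀ v : Fin Q.n → ℤ, Q.euler y v = 0 → 0 ≤ ∑ i, v i →
      Q.euler v v ≤ ∑ i, v i → ∑ i, v i ≤ T) :
    ∃ V₃ : MRep k Q, ExtZ V₃ V₃ ∧ ∀ M, Perp V₃ M ↔ Perp V₁ M ∧ Perp V₂ M := by
  have wU := wide_perp V₁
  have wW := wU.and (wide_perp V₂)
  have key : ∀ {P : MRep k Q → Prop}, Wide P → (∀ M, P M → Perp V₁ M) → ∃ B b, Univ P B b := by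
    intro P hP hPV
    refine exists_univ hP T (fun M m hM hm => ?_)
    have htd : (∑ i, M.dv i) = (td M : ℤ) := by simp [dv, td]
    have := hT M.dv (hy M (hPV M hM)) (by rw [htd]; positivity) (gen_bound hP hM hm)
    rw [htd] at this
    exact_mod_cast this
  obtain ⟨BU, u, hU⟩ := key wU (fun _ h => h)
  obtain ⟨BW, w, hW⟩ := key wW (fun _ h => h.1)
  exact main_aux V₁ V₂ h₁ hU hW

/-- Retracts. -/
theorem Perp.retract {L V M : MRep k Q} {f : Fam L V} {g : Fam V L} (hf : IsHom L V f)
    (hg : IsHom V L g) (hgf : ∀ i v, g i (f i v) = v) (h : Perp V M) : Perp L M := by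
  constructor
  · intro φ hφ i v
    have := h.1 _ (hφ.comp hg) i (f i v)
    simpa [hgf] using this
  · intro ξ
    obtain ⟨e, he⟩ := h.2 (fun x => ξ x ∘ₗ g _)
    refine ⟨fun i => e i ∘ₗ f i, fun x v => ?_⟩
    have := he x (f _ v)
    simpa [hgf, hf x] using this

end MRep

/-! ### Numerics -/

namespace FinQuiver

variable (Q : FinQuiver)

theorem euler_add_left (a b c : Fin Q.n → ℤ) :
    Q.euler (a + b) c = Q.euler a c + Q.euler b c := by
  simp only [euler, Pi.add_apply, add_mul, Finset.sum_add_distrib]; ring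

theorem euler_add_right (a b c : Fin Q.n → ℤ) :
    Q.euler a (b + c) = Q.euler a b + Q.euler a c := by
  simp only [euler, Pi.add_apply, mul_add, Finset.sum_add_distrib]; ring

theorem euler_smul_left (t : ℤ) (a c : Fin Q.n → ℤ) :
    Q.euler (t • a) c = t * Q.euler a c := by
  simp only [euler, Pi.smul_apply, smul_eq_mul, mul_assoc, ← Finset.mul_sum]; ring

theorem euler_smul_right (t : ℤ) (a c : Fin Q.n → ℤ) :
    Q.euler a (t • c) = t * Q.euler a c := by
  simp only [euler, Pi.smul_apply, smul_eq_mul, mul_left_comm _ t, ← Finset.mul_sum]; ring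

/-- A positive definite symmetric form attached to a vector `y`. -/
def sform (y : Fin Q.n → ℤ) : (Fin Q.n → ℤ) →ₗ[ℤ] (Fin Q.n → ℤ) →ₗ[ℤ] ℤ :=
  LinearMap.mk₂ ℤ (fun v w => Q.euler v w + Q.euler w v + 2 * (Q.euler y v * Q.euler y w))
    (by intro a b c; simp only [euler_add_left, euler_add_right]; ring)
    (by intro a b c; simp only [euler_smul_left, euler_smul_right, smul_eq_mul]; ring)
    (by intro a b c; simp only [euler_add_left, euler_add_right]; ring)
    (by intro a b c; simp only [euler_smul_left, euler_smul_right, smul_eq_mul]; ring)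

theorem sform_apply (y v w : Fin Q.n → ℤ) :
    Q.sform y v w = Q.euler v w + Q.euler w v + 2 * (Q.euler y v * Q.euler y w) := rfl

theorem null_symm (hp : ∀ d, 0 ≤ Q.euler d d) {δ : Fin Q.n → ℤ} (hδ : Q.euler δ δ = 0)
    (v : Fin Q.n → ℤ) : Q.euler δ v + Q.euler v δ = 0 := by
  by_contra hne
  set c := Q.euler δ v + Q.euler v δ with hc
  have h := hp (v + (-(c * (Q.euler v v + 1))) • δ)
  simp only [euler_add_left, euler_add_right, euler_smul_left, euler_smul_right, hδ] at h
  have e : Q.euler v v - (c * c) * (Q.euler v v + 1) ≥ 0 := by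
    have : Q.euler δ v = c - Q.euler v δ := by rw [hc]; ring
    rw [this] at h
    nlinarith
  have h1 : 1 ≤ c * c := by
    have := mul_self_pos.2 hne
    omega
  nlinarith [hp v]

theorem bound (hp : ∀ d, 0 ≤ Q.euler d d) {δ : Fin Q.n → ℤ} (hδ : Q.IsNullRoot δ)
    (y : Fin Q.n → ℤ) (hy : Q.euler y δ ≠ 0) :
    ∃ T : ℕ, ∀ v : Fin Q.n → ℤ, Q.euler y v = 0 → 0 ≤ ∑ i, v i →
      Q.euler v v ≤ ∑ i, v i → ∑ i, v i ≤ T := by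
  classical
  set S := LinearMap.toMatrix₂' ℤ (Q.sform y) with hS
  have hSv : ∀ v w, Q.sform y v w = v ⬝ᵥ (S *ᵥ w) := by
    intro v w
    have : Q.sform y = Matrix.toLinearMap₂' ℤ S := by rw [hS, Matrix.toLinearMap₂'_toMatrix']
    rw [this, Matrix.toLinearMap₂'_apply']
  have hnn : ∀ v, 0 ≤ Q.sform y v v := by
    intro v
    rw [sform_apply]
    nlinarith [hp v, mul_self_nonneg (Q.euler y v)]
  have hdet : S.det ≠ 0 := by
    intro h0
    obtain ⟨v, hv, hv0⟩ := Matrix.exists_mulVec_eq_zero_iff.2 h0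
    have h1 := hSv v v
    rw [hv0, dotProduct_zero, sform_apply] at h1
    have h2 := mul_self_nonneg (Q.euler y v)
    have h3 : Q.euler v v = 0 := by nlinarith [hp v]
    have h4 : Q.euler y v * Q.euler y v = 0 := by nlinarith [hp v]
    obtain ⟨m, rfl⟩ := hδ.2.2 v h3
    rw [mul_self_eq_zero, euler_smul_right] at h4
    rcases mul_eq_zero.1 h4 with h5 | h5
    · exact hv (by rw [h5, zero_smul])
    · exact hy h5
  set w : Fin Q.n → ℤ := S.adjugate *ᵥ (fun _ => 1) with hw
  have hBw : ∀ v, Q.sform y v w = S.det * ∑ i, v i := by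
    intro v
    rw [hSv, hw, Matrix.mulVec_mulVec, Matrix.mul_adjugate, Matrix.smul_mulVec, Matrix.one_mulVec]
    simp [dotProduct, Finset.sum_mul, mul_comm]
  have hsymm : ∀ v w, Q.sform y v w = Q.sform y w v := by
    intro v w; simp only [sform_apply]; ring
  refine ⟨(2 * Q.sform y w w).toNat, fun v h1 h2 h3 => ?_⟩
  rw [Int.toNat_of_nonneg (by linarith [hnn w])]
  set l := ∑ i, v i with hl
  have hvv : Q.sform y v v = 2 * Q.euler v v := by rw [sform_apply, h1]; ring
  -- Cauchy-Schwarz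
  have cs := hnn (S.det • v - (2 : ℤ) • w)
  have hexp : Q.sform y (S.det • v - (2 : ℤ) • w) (S.det • v - (2 : ℤ) • w) =
      S.det * S.det * Q.sform y v v - 4 * S.det * Q.sform y v w + 4 * Q.sform y w w := by
    simp only [map_sub, map_smul, LinearMap.sub_apply, LinearMap.smul_apply, smul_eq_mul]
    rw [hsymm w v]; ring
  rw [hexp, hBw, hvv] at cs
  have hN : 1 ≤ S.det * S.det := by
    have := mul_self_pos.2 hdet
    omega
  have h5 : S.det * S.det * Q.euler v v ≤ S.det * S.det * l :=
    mul_le_mul_of_nonneg_left h3 (by omega)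
  have h6 : 1 * l ≤ S.det * S.det * l := mul_le_mul_of_nonneg_right hN h2
  nlinarith

end FinQuiver

/-! ### Translation between matrix representations and module representations -/

namespace QRep

variable {k : Type} [Field k] {Q : FinQuiver}

/-- The module representation attached to a matrix representation. -/
def toM (M : QRep k Q) : MRep k Q where
  V i := Fin (M.d i) → k
  map x := (M.mat x).mulVecLin

theorem dv_toM (M : QRep k Q) : M.toM.dv = M.dimVec := by
  funext i
  change ((Module.finrank k (Fin (M.d i) → k) : ℕ) : ℤ) = _
  rw [Module.finrank_fin_fun]; rfl

/-- family of linear maps from matrices -/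
def famOf (M N : QRep k Q) (f : ∀ i, Matrix (Fin (N.d i)) (Fin (M.d i)) k) :
    MRep.Fam M.toM N.toM := fun i => (f i).mulVecLin

/-- matrices from linear maps -/
noncomputable def matOf (M N : QRep k Q) (f : MRep.Fam M.toM N.toM) :
    ∀ i, Matrix (Fin (N.d i)) (Fin (M.d i)) k :=
  fun i => LinearMap.toMatrix' (m := Fin (N.d i)) (n := Fin (M.d i)) (f i)

theorem famOf_matOf (M N : QRep k Q) (f : MRep.Fam M.toM N.toM) :
    famOf M N (matOf M N f) = f := by
  funext i
  exact Matrix.toLin'_toMatrix' (m := Fin (N.d i)) (n := Fin (M.d i)) (f i)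

theorem matOf_famOf (M N : QRep k Q) (f : ∀ i, Matrix (Fin (N.d i)) (Fin (M.d i)) k) :
    matOf M N (famOf M N f) = f := by
  funext i
  exact LinearMap.toMatrix'_toLin' (f i)

theorem isHom_famOf (M N : QRep k Q) (f) :
    MRep.IsHom M.toM N.toM (famOf M N f) ↔ f ∈ homSpace M N := by
  constructor
  · intro h x
    apply Matrix.mulVec_injective
    funext v
    have : f (Q.tgt x) *ᵥ (M.mat x *ᵥ v) = N.mat x *ᵥ (f (Q.src x) *ᵥ v) := h x v
    simpa [Matrix.mulVec_mulVec] using this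
  · intro h x v
    have key : ∀ v : Fin (M.d (Q.src x)) → k,
        f (Q.tgt x) *ᵥ (M.mat x *ᵥ v) = N.mat x *ᵥ (f (Q.src x) *ᵥ v) := by
      intro v
      rw [Matrix.mulVec_mulVec, Matrix.mulVec_mulVec, h x]
    exact key v

theorem extDim_iff (M N : QRep k Q) : extDim M N = 0 ↔ MRep.ExtZ M.toM N.toM := by
  rw [extDim, Module.finrank_zero_iff, Submodule.Quotient.subsingleton_iff,
    LinearMap.range_eq_top]
  constructor
  · intro h ξ
    obtain ⟨e, he⟩ := h (fun x =>
      LinearMap.toMatrix' (m := Fin (N.d (Q.tgt x))) (n := Fin (M.d (Q.src x))) (ξ x))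
    refine ⟨famOf M N e, fun x v => ?_⟩
    have h1 : (LinearMap.toMatrix' (m := Fin (N.d (Q.tgt x))) (n := Fin (M.d (Q.src x)))
      (ξ x)).mulVecLin = ξ x := Matrix.toLin'_toMatrix' _
    have h2 := congrFun he x
    have h3 : (extMap M N e x).mulVecLin v = ξ x v := by rw [h2]; exact LinearMap.congr_fun h1 v
    rw [← h3]
    have key : ∀ v : Fin (M.d (Q.src x)) → k,
        (e (Q.tgt x) * M.mat x - N.mat x * e (Q.src x)) *ᵥ v =
        e (Q.tgt x) *ᵥ (M.mat x *ᵥ v) - N.mat x *ᵥ (e (Q.src x) *ᵥ v) := by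
      intro v
      rw [Matrix.sub_mulVec, Matrix.mulVec_mulVec, Matrix.mulVec_mulVec]
    exact key v
  · intro h ξ
    obtain ⟨e, he⟩ := h (fun x => (ξ x).mulVecLin)
    refine ⟨matOf M N e, ?_⟩
    rw [← famOf_matOf M N e] at he
    funext x
    apply Matrix.mulVec_injective
    funext v
    have h3 : ξ x *ᵥ v = matOf M N e (Q.tgt x) *ᵥ (M.mat x *ᵥ v) -
      N.mat x *ᵥ (matOf M N e (Q.src x) *ᵥ v) := he x v
    rw [h3]
    change (matOf M N e (Q.tgt x) * M.mat x - N.mat x * matOf M N e (Q.src x)) *ᵥ v = _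
    rw [Matrix.sub_mulVec, Matrix.mulVec_mulVec, Matrix.mulVec_mulVec]

theorem exists_toM (X : MRep k Q) : ∃ (M : QRep k Q) (f : MRep.Fam X M.toM)
    (g : MRep.Fam M.toM X), MRep.IsHom X M.toM f ∧ MRep.IsHom M.toM X g ∧
      (∀ i v, g i (f i v) = v) ∧ (∀ i v, f i (g i v) = v) := by
  let b : ∀ i, (X.V i) ≃ₗ[k] (Fin (Module.finrank k (X.V i)) → k) :=
    fun i => (Module.finBasis k (X.V i)).equivFun
  let M : QRep k Q :=
    { d := fun i => Module.finrank k (X.V i)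
      mat := fun x => LinearMap.toMatrix' ((b _).toLinearMap ∘ₗ X.map x ∘ₗ (b _).symm.toLinearMap) }
  have hM : ∀ x v, M.toM.map x v = b _ (X.map x ((b _).symm v)) := by
    intro x v
    exact LinearMap.congr_fun (Matrix.toLin'_toMatrix'
      ((b _).toLinearMap ∘ₗ X.map x ∘ₗ (b _).symm.toLinearMap)) v
  refine ⟨M, fun i => (b i).toLinearMap, fun i => (b i).symm.toLinearMap, ?_, ?_, ?_, ?_⟩
  · intro x v
    rw [hM]
    change b _ (X.map x v) = b _ (X.map x ((b _).symm (b _ v)))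
    rw [LinearEquiv.symm_apply_apply]
  · intro x v
    rw [hM]
    exact LinearEquiv.symm_apply_apply _ _
  · intro i v; exact LinearEquiv.symm_apply_apply _ _
  · intro i v; exact LinearEquiv.apply_symm_apply _ _

theorem isSubrep_iff (L M : QRep k Q) : IsSubrep L M ↔
    ∃ f, MRep.IsHom L.toM M.toM f ∧ ∀ i, Function.Injective (f i) := by
  constructor
  · rintro ⟨f, hf, hi⟩
    exact ⟨famOf L M f, (isHom_famOf L M f).2 hf, hi⟩
  · rintro ⟨f, hf, hi⟩
    rw [← famOf_matOf L M f] at hf hi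
    exact ⟨matOf L M f, (isHom_famOf L M _).1 hf, hi⟩

theorem semiStable_iff (V M : QRep k Q) (hV : MRep.ExtZ V.toM V.toM) :
    SemiStable V.dimVec M ↔ MRep.Perp V.toM M.toM := by
  constructor
  · rintro ⟨h0, hL⟩
    have hom0 : MRep.HomZ V.toM M.toM := by
      intro f hf
      have S1 := MRep.ses_ker f hf
      have S2 := MRep.ses_cok f hf
      obtain ⟨L, a, b, ha, hb, hba, hab⟩ := exists_toM (MRep.imR f hf)
      have hsub : IsSubrep L M := by
        rw [isSubrep_iff]
        refine ⟨_, S2.hf.comp hb, fun i => ?_⟩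
        exact (S2.inj i).comp (Function.LeftInverse.injective (hab i))
      have h1 := hL L hsub
      rw [← dv_toM, ← dv_toM] at h1
      have hI : MRep.ExtZ V.toM (MRep.imR f hf) := S1.c1 hV
      have hdv : L.toM.dv = (MRep.imR f hf).dv := by
        funext i
        have e : (MRep.imR f hf).V i ≃ₗ[k] L.toM.V i :=
          { (a i) with invFun := b i, left_inv := hba i, right_inv := hab i }
        change ((Module.finrank k _ : ℕ) : ℤ) = ((Module.finrank k _ : ℕ) : ℤ)
        rw [e.finrank_eq]
      rw [hdv, MRep.euler_of_extZ hI] at h1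
      have h2 : Module.finrank k (LinearMap.ker (MRep.dmap V.toM (MRep.imR f hf))) = 0 := by
        omega
      have h3 := (MRep.homZ_iff _ _).2 (Submodule.finrank_eq_zero.1 h2)
      intro i v
      have := h3 _ S1.hg i v
      exact congrArg Subtype.val this
    refine ⟨hom0, MRep.extZ_of_homZ hom0 ?_⟩
    rw [dv_toM, dv_toM]; exact h0
  · intro h
    refine ⟨?_, fun L hL => ?_⟩
    · have := MRep.euler_of_perp h
      rwa [dv_toM, dv_toM] at this
    · obtain ⟨f, hf, hi⟩ := (isSubrep_iff L M).1 hL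
      have : MRep.HomZ V.toM L.toM := by
        intro e he i v
        apply hi i
        simpa using h.1 _ (hf.comp he) i v
      have := MRep.euler_of_homZ this
      rwa [dv_toM, dv_toM] at this

theorem IsSummand.trans {A B C : QRep k Q} (h : IsSummand A B) (h' : IsSummand B C) :
    IsSummand A C := by
  obtain ⟨f, hf, g, hg, e⟩ := h
  obtain ⟨f', hf', g', hg', e'⟩ := h'
  refine ⟨fun i => f' i * f i, ?_, fun i => g i * g' i, ?_, ?_⟩
  · intro x
    rw [Matrix.mul_assoc, hf x, ← Matrix.mul_assoc, hf' x, Matrix.mul_assoc]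
  · intro x
    rw [Matrix.mul_assoc, hg' x, ← Matrix.mul_assoc, hg x, Matrix.mul_assoc]
  · intro i
    rw [Matrix.mul_assoc, ← Matrix.mul_assoc (g' i), e', Matrix.one_mul, e]

theorem exists_indec_summand : ∀ (t : ℕ) (V : QRep k Q), (∑ i, V.d i) ≤ t →
    (∃ i, V.d i ≠ 0) → ∃ L, IsSummand L V ∧ Indec L := by
  intro t
  induction t with
  | zero =>
    rintro V ht ⟨i, hi⟩
    exfalso
    have := Finset.single_le_sum (f := V.d) (fun _ _ => Nat.zero_le _) (Finset.mem_univ i)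
    omega
  | succ t ih =>
    intro V ht hV
    by_cases hI : Indec V
    · refine ⟨V, ⟨1, ?_, 1, ?_, fun i => ?_⟩, hI⟩
      · intro x; simp
      · intro x; simp
      · simp
    · have : ∃ f ∈ homSpace V V, (∀ i, f i * f i = f i) ∧ f ≠ 0 ∧ f ≠ 1 := by
        by_contra! hcon
        refine hI ⟨hV, fun f hf hff => ?_⟩
        by_contra! h2
        exact h2.2 (hcon f hf hff h2.1)
      obtain ⟨f, hf, hff, hf0, hf1⟩ := this
      have hfv : ∀ i (y : Fin (V.d i) → k), f i *ᵥ (f i *ᵥ y) = f i *ᵥ y := by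
        intro i y
        rw [Matrix.mulVec_mulVec, hff]
      have hfam := (isHom_famOf V V f).2 hf
      have S1 := MRep.ses_ker _ hfam
      have S2 := MRep.ses_cok _ hfam
      obtain ⟨L, a, b, ha, hb, hba, hab⟩ := exists_toM (MRep.imR _ hfam)
      have hin := S2.hf.comp hb
      have hout := ha.comp S1.hg
      have hret : ∀ i v, (a i ∘ₗ (famOf V V f i).rangeRestrict)
          (((LinearMap.range (famOf V V f i)).subtype ∘ₗ b i) v) = v := by
        intro i v
        change a i ((famOf V V f i).rangeRestrict (b i v).1) = v
        have : (famOf V V f i).rangeRestrict (b i v).1 = b i v := by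
          apply Subtype.ext
          obtain ⟨y, hy⟩ := (b i v).2
          change famOf V V f i (b i v).1 = (b i v).1
          rw [← hy]
          exact hfv i y
        rw [this]
        exact hab i v
      generalize hinn : (fun i => (LinearMap.range (famOf V V f i)).subtype ∘ₗ b i :
        MRep.Fam L.toM V.toM) = inn at hin
      generalize houtt : (fun i => a i ∘ₗ (famOf V V f i).rangeRestrict :
        MRep.Fam V.toM L.toM) = out at hout
      have hret' : ∀ i v, out i (inn i v) = v := by
        intro i v
        rw [← hinn, ← houtt]
        exact hret i v
      have hinj : ∀ i, Function.Injective (inn i) := fun i =>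
        Function.LeftInverse.injective (hret' i)
      have hsum : IsSummand L V := by
        rw [← famOf_matOf L V inn] at hin
        rw [← famOf_matOf V L out] at hout
        refine ⟨_, (isHom_famOf _ _ _).1 hin, _, (isHom_famOf _ _ _).1 hout, fun i => ?_⟩
        apply Matrix.mulVec_injective
        funext v
        rw [← Matrix.mulVec_mulVec, Matrix.one_mulVec]
        have := hret' i v
        rw [← famOf_matOf L V inn, ← famOf_matOf V L out] at this
        exact this
      have hfin : ∀ M : QRep k Q, M.toM.td = ∑ i, M.d i := by
        intro M
        refine Finset.sum_congr rfl fun i _ => ?_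
        change Module.finrank k (Fin (M.d i) → k) = _
        exact Module.finrank_fin_fun k
      have hlt : (∑ i, L.d i) < ∑ i, V.d i := by
        rw [← hfin, ← hfin]
        refine lt_of_le_of_ne (MRep.td_le_of_inj inn hinj) fun heq => hf1 ?_
        have hs := MRep.surj_of_inj inn hinj heq.ge
        funext i
        apply Matrix.mulVec_injective
        funext v
        obtain ⟨y, hy⟩ := hs i v
        rw [← hinn] at hy
        have h1 : v ∈ LinearMap.range (famOf V V f i) := by
          rw [← hy]; exact (b i y).2
        obtain ⟨z, hz⟩ := h1
        have hz' : f i *ᵥ z = v := hz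
        rw [← hz']
        exact (hfv i z).trans (Matrix.one_mulVec _).symm
      have hne : ∃ i, L.d i ≠ 0 := by
        by_contra! h0
        apply hf0
        funext i
        apply Matrix.mulVec_injective
        funext v
        have : Subsingleton (L.toM.V i) := by
          change Subsingleton (Fin (L.d i) → k)
          rw [h0 i]; infer_instance
        have h1 : ∀ v : V.toM.V i, (famOf V V f i).rangeRestrict v = 0 := fun v =>
          (hba i _).symm.trans ((congrArg (b i) (Subsingleton.elim _ 0)).trans (map_zero (b i)))
        have h2 : f i *ᵥ v = 0 := congrArg Subtype.val (h1 v)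
        rw [h2]; simp
      obtain ⟨L', h1, h2⟩ := ih L (by omega) hne
      exact ⟨L', h1.trans hsum, h2⟩

end QRep

open QRep in
/-- for strongly prehomogeneous dimension vectors `d₁ = dim V₁`,
`d₂ = dim V₂` (rigid with all indecomposable summands non-regular), the
intersection of the semi-stable subcategories is again semi-stable, for a
prehomogeneous dimension vector `d₃ = dim V₃` with `V₃` rigid. -/
theorem inter_semistable_strongly_prehom (k : Type) [Field k] [IsAlgClosed k]
    (Q : FinQuiver) (hQ : Q.IsEuclidean) (δ : Fin Q.n → ℤ) (hδ : Q.IsNullRoot δ)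
    (V₁ V₂ : QRep k Q) (h₁ : extDim V₁ V₁ = 0) (h₂ : extDim V₂ V₂ = 0)
    (hs₁ : ∀ L, IsSummand L V₁ → Indec L → Q.euler δ L.dimVec ≠ 0)
    (hs₂ : ∀ L, IsSummand L V₂ → Indec L → Q.euler δ L.dimVec ≠ 0) :
    ∃ V₃ : QRep k Q, extDim V₃ V₃ = 0 ∧
      ∀ M : QRep k Q,
        (SemiStable V₁.dimVec M ∧ SemiStable V₂.dimVec M) ↔
          SemiStable V₃.dimVec M := by
  have e₁ := (extDim_iff V₁ V₁).1 h₁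
  have e₂ := (extDim_iff V₂ V₂).1 h₂
  by_cases hz : ∃ i, V₁.d i ≠ 0
  · obtain ⟨L, hL, hLi⟩ := exists_indec_summand _ V₁ le_rfl hz
    have hne := hs₁ L hL hLi
    have hsym := Q.null_symm hQ.2.2.1 hδ.2.1 L.dimVec
    obtain ⟨T, hT⟩ := Q.bound hQ.2.2.1 hδ L.dimVec (by omega)
    have hy : ∀ M, MRep.Perp V₁.toM M → Q.euler L.dimVec M.dv = 0 := by
      intro M hM
      obtain ⟨f, hf, g, hg, hgf⟩ := hL
      rw [← dv_toM]
      apply MRep.euler_of_perp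
      refine MRep.Perp.retract ((isHom_famOf _ _ f).2 hf) ((isHom_famOf _ _ g).2 hg) ?_ hM
      intro i v
      have key : ∀ v : Fin (L.d i) → k, g i *ᵥ (f i *ᵥ v) = v := by
        intro v
        rw [Matrix.mulVec_mulVec, hgf, Matrix.one_mulVec]
      exact key v
    obtain ⟨X, hX, hXp⟩ := MRep.main V₁.toM V₂.toM e₁ L.dimVec hy T hT
    obtain ⟨V₃, a, b, ha, hb, hba, hab⟩ := exists_toM X
    have hp : ∀ M, MRep.Perp V₃.toM M ↔ MRep.Perp X M := fun M =>
      ⟨MRep.Perp.retract ha hb hba, MRep.Perp.retract hb ha hab⟩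
    have hE : MRep.ExtZ V₃.toM V₃.toM := by
      intro ξ
      obtain ⟨h, hh⟩ := hX (fun x => b _ ∘ₗ ξ x ∘ₗ a _)
      refine ⟨fun i => a i ∘ₗ h i ∘ₗ b i, fun x v => ?_⟩
      have h1 := congrArg (a _) (hh x (b _ v))
      simp only [LinearMap.comp_apply, hab, map_sub] at h1 ⊢
      rw [h1, hb, ha]
    refine ⟨V₃, (extDim_iff _ _).2 hE, fun M => ?_⟩
    rw [semiStable_iff _ _ e₁, semiStable_iff _ _ e₂, semiStable_iff _ _ hE, hp, hXp]
  · push Not at hz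
    have hs : ∀ i, Subsingleton (V₁.toM.V i) := by
      intro i
      change Subsingleton (Fin (V₁.d i) → k)
      rw [hz i]; infer_instance
    refine ⟨V₂, h₂, fun M => ?_⟩
    rw [semiStable_iff _ _ e₁]
    refine and_iff_right ⟨?_, ?_⟩
    · intro f _ i v
      rw [Subsingleton.elim v 0, map_zero]
    · intro ξ
      refine ⟨fun _ => 0, fun x v => ?_⟩
      rw [Subsingleton.elim v 0]
      simp
end

section
/- Let Q be a Euclidean quiver and d a dimension vector with canonical decomposition d = d̂ ⊕ δ^s with s ≥ 1, where δ is the null root and d̂ is prehomogeneous. Set V = M(d̂). Then the semi-stable subcategory rep(Q)_d equals V^⊥ ∩ Reg, where Reg is the additive subcategory of regular representations. -/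
open Matrix BigOperators

namespace SSNR

/-- A linear (coordinate free) representation of `Q`. -/
structure LRep (k : Type) [Field k] (Q : FinQuiver) where
  E : Fin Q.n → Type
  [acg : ∀ i, AddCommGroup (E i)]
  [mod : ∀ i, Module k (E i)]
  [fin : ∀ i, FiniteDimensional k (E i)]
  φ : ∀ x : Fin Q.a, E (Q.src x) →ₗ[k] E (Q.tgt x)

attribute [instance] LRep.acg LRep.mod LRep.fin

variable {k : Type} [Field k] {Q : FinQuiver}

/-- dimension vector -/
noncomputable def dv (X : LRep k Q) : Fin Q.n → ℤ := fun i => (Module.finrank k (X.E i) : ℤ)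

def IsHom (X Y : LRep k Q) (f : ∀ i, X.E i →ₗ[k] Y.E i) : Prop :=
  ∀ x v, f (Q.tgt x) (X.φ x v) = Y.φ x (f (Q.src x) v)

def ExtZ (X Y : LRep k Q) : Prop :=
  ∀ c : (∀ x, X.E (Q.src x) →ₗ[k] Y.E (Q.tgt x)), ∃ f : (∀ i, X.E i →ₗ[k] Y.E i),
    ∀ x v, c x v = f (Q.tgt x) (X.φ x v) - Y.φ x (f (Q.src x) v)

def HomZ (X Y : LRep k Q) : Prop := ∀ f, IsHom X Y f → ∀ i v, f i v = 0

def D (X Y : LRep k Q) : (∀ i, X.E i →ₗ[k] Y.E i) →ₗ[k]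
    (∀ x, X.E (Q.src x) →ₗ[k] Y.E (Q.tgt x)) where
  toFun f := fun x => f (Q.tgt x) ∘ₗ X.φ x - Y.φ x ∘ₗ f (Q.src x)
  map_add' f g := by
    funext x; ext v; simp; abel
  map_smul' c f := by
    funext x; ext v; simp [smul_sub]

lemma D_apply (X Y : LRep k Q) (f x v) :
    D X Y f x v = f (Q.tgt x) (X.φ x v) - Y.φ x (f (Q.src x) v) := rfl

lemma extZ_iff (X Y : LRep k Q) : ExtZ X Y ↔ Function.Surjective (D X Y) := by
  constructor
  · intro h c
    obtain ⟨f, hf⟩ := h c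
    exact ⟨f, by funext x; ext v; rw [D_apply, hf]⟩
  · intro h c
    obtain ⟨f, hf⟩ := h c
    exact ⟨f, fun x v => by rw [← D_apply, hf]⟩

lemma D_eq_zero_iff (X Y : LRep k Q) (f) : D X Y f = 0 ↔ IsHom X Y f := by
  constructor
  · intro h x v
    have := LinearMap.congr_fun (congrFun h x) v
    rw [D_apply] at this
    exact sub_eq_zero.1 this
  · intro h
    funext x; ext v
    rw [D_apply, h x v, sub_self]; rfl

lemma homZ_iff (X Y : LRep k Q) : HomZ X Y ↔ Function.Injective (D X Y) := by
  rw [← LinearMap.ker_eq_bot, LinearMap.ker_eq_bot']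
  constructor
  · intro h f hf
    funext i; ext v
    exact h f ((D_eq_zero_iff X Y f).1 hf) i v
  · intro h f hf i v
    rw [h f ((D_eq_zero_iff X Y f).2 hf)]; rfl

lemma finrank_C (X Y : LRep k Q) :
    (Module.finrank k (∀ i, X.E i →ₗ[k] Y.E i) : ℤ)
      - Module.finrank k (∀ x, X.E (Q.src x) →ₗ[k] Y.E (Q.tgt x)) = Q.euler (dv X) (dv Y) := by
  rw [Module.finrank_pi_fintype, Module.finrank_pi_fintype]
  simp [Module.finrank_linearMap, FinQuiver.euler, dv]

lemma euler_nonpos_of_homZ {X Y : LRep k Q} (h : HomZ X Y) : Q.euler (dv X) (dv Y) ≤ 0 := by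
  have := LinearMap.finrank_le_finrank_of_injective ((homZ_iff X Y).1 h)
  rw [← finrank_C]; omega

lemma euler_nonneg_of_extZ {X Y : LRep k Q} (h : ExtZ X Y) : 0 ≤ Q.euler (dv X) (dv Y) := by
  have := LinearMap.finrank_le_finrank_of_surjective ((extZ_iff X Y).1 h)
  rw [← finrank_C]; omega

lemma extZ_of_homZ {X Y : LRep k Q} (h : HomZ X Y) (he : 0 ≤ Q.euler (dv X) (dv Y)) :
    ExtZ X Y := by
  have h1 := euler_nonpos_of_homZ h
  rw [← finrank_C] at h1 he
  rw [extZ_iff, ← LinearMap.injective_iff_surjective_of_finrank_eq_finrank (by omega)]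
  exact (homZ_iff X Y).1 h

lemma homZ_of_extZ {X Y : LRep k Q} (h : ExtZ X Y) (he : Q.euler (dv X) (dv Y) ≤ 0) :
    HomZ X Y := by
  have h1 := euler_nonneg_of_extZ h
  rw [← finrank_C] at h1 he
  rw [homZ_iff, LinearMap.injective_iff_surjective_of_finrank_eq_finrank (by omega)]
  exact (extZ_iff X Y).1 h

/-! Euler form -/
lemma euler_add_right (d e f : Fin Q.n → ℤ) : Q.euler d (e + f) = Q.euler d e + Q.euler d f := by
  simp [FinQuiver.euler, mul_add, Finset.sum_add_distrib]; ring

lemma euler_add_left (d e f : Fin Q.n → ℤ) : Q.euler (d + e) f = Q.euler d f + Q.euler e f := by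
  simp [FinQuiver.euler, add_mul, Finset.sum_add_distrib]; ring

lemma euler_smul_left (c : ℤ) (d e : Fin Q.n → ℤ) : Q.euler (c • d) e = c * Q.euler d e := by
  simp [FinQuiver.euler, mul_sub, Finset.mul_sum, mul_assoc]

lemma euler_smul_right (c : ℤ) (d e : Fin Q.n → ℤ) : Q.euler d (c • e) = c * Q.euler d e := by
  simp [FinQuiver.euler, mul_sub, Finset.mul_sum, mul_left_comm]

lemma euler_zero_right (d : Fin Q.n → ℤ) : Q.euler d 0 = 0 := by
  simp [FinQuiver.euler]

lemma euler_zero_left (d : Fin Q.n → ℤ) : Q.euler 0 d = 0 := by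
  simp [FinQuiver.euler]

lemma euler_null (hQ : ∀ d, 0 ≤ Q.euler d d) {δ : Fin Q.n → ℤ} (hδ : Q.euler δ δ = 0)
    (x : Fin Q.n → ℤ) : Q.euler x δ = - Q.euler δ x := by
  have h : ∀ m : ℤ, 0 ≤ Q.euler x x + m * (Q.euler δ x + Q.euler x δ) := by
    intro m
    have := hQ (x + m • δ)
    simp only [euler_add_left, euler_add_right, euler_smul_left, euler_smul_right, hδ] at this
    linarith
  by_contra hne
  have hne' : Q.euler δ x + Q.euler x δ ≠ 0 := by intro h0; apply hne; linarith
  have h0 := hQ x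
  rcases lt_or_gt_of_ne hne' with h1 | h1
  · have := h (Q.euler x x + 1); nlinarith
  · have := h (-(Q.euler x x + 1)); nlinarith

/-! Ext vanishing along monos, epis -/
lemma extZ_of_inj {A B N : LRep k Q} (f) (hf : IsHom A B f) (hi : ∀ i, Function.Injective (f i))
    (h : ExtZ B N) : ExtZ A N := by
  intro c
  have hl : ∀ i, ∃ g : B.E i →ₗ[k] A.E i, g ∘ₗ f i = LinearMap.id := fun i =>
    LinearMap.exists_leftInverse_of_injective (f i) (LinearMap.ker_eq_bot.2 (hi i))
  choose g hg using hl
  obtain ⟨F, hF⟩ := h (fun x => c x ∘ₗ g (Q.src x))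
  refine ⟨fun i => F i ∘ₗ f i, fun x v => ?_⟩
  have := hF x (f (Q.src x) v)
  have h2 := LinearMap.congr_fun (hg (Q.src x)) v
  simp at h2 this ⊢
  rw [h2] at this
  rw [this, hf x v]

lemma extZ_of_surj {B C N : LRep k Q} (f) (hf : IsHom B C f) (hi : ∀ i, Function.Surjective (f i))
    (h : ExtZ N B) : ExtZ N C := by
  intro c
  have hl : ∀ i, ∃ g : C.E i →ₗ[k] B.E i, f i ∘ₗ g = LinearMap.id := fun i =>
    LinearMap.exists_rightInverse_of_surjective (f i) (LinearMap.range_eq_top.2 (hi i))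
  choose g hg using hl
  obtain ⟨F, hF⟩ := h (fun x => g (Q.tgt x) ∘ₗ c x)
  refine ⟨fun i => f i ∘ₗ F i, fun x v => ?_⟩
  have := congrArg (f (Q.tgt x)) (hF x v)
  have h2 := LinearMap.congr_fun (hg (Q.tgt x)) (c x v)
  simp at h2 this ⊢
  rw [h2] at this
  rw [this, hf x]

lemma homZ_of_inj {A B N : LRep k Q} (f) (hf : IsHom A B f) (hi : ∀ i, Function.Injective (f i))
    (h : HomZ N B) : HomZ N A := by
  intro g hg i v
  apply hi i
  have := h (fun i => f i ∘ₗ g i) (fun x v => by simp [hg x v, hf x]) i v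
  simpa using this

lemma homZ_of_surj {B C N : LRep k Q} (f) (hf : IsHom B C f) (hi : ∀ i, Function.Surjective (f i))
    (h : HomZ B N) : HomZ C N := by
  intro g hg i v
  obtain ⟨w, rfl⟩ := hi i v
  exact h (fun i => g i ∘ₗ f i) (fun x v => by simp [hg x, hf x v]) i w

/-! Subs and quotients -/
def Inv (X : LRep k Q) (U : ∀ i, Submodule k (X.E i)) : Prop :=
  ∀ x, ∀ v ∈ U (Q.src x), X.φ x v ∈ U (Q.tgt x)

def sub (X : LRep k Q) (U : ∀ i, Submodule k (X.E i)) (hU : Inv X U) : LRep k Q where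
  E i := U i
  φ x := (X.φ x).restrict (hU x)

def quo (X : LRep k Q) (U : ∀ i, Submodule k (X.E i)) (hU : Inv X U) : LRep k Q where
  E i := X.E i ⧸ U i
  φ x := (U (Q.src x)).mapQ (U (Q.tgt x)) (X.φ x) (hU x)

/-- inclusion of a sub -/
def incl (X : LRep k Q) (U) (hU : Inv X U) (i) : (sub X U hU).E i →ₗ[k] X.E i := (U i).subtype

/-- projection to a quotient -/
def proj (X : LRep k Q) (U) (hU : Inv X U) (i) : X.E i →ₗ[k] (quo X U hU).E i := (U i).mkQ

/-- short exact sequences -/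
structure SES (A B C : LRep k Q) (ι : ∀ i, A.E i →ₗ[k] B.E i) (π : ∀ i, B.E i →ₗ[k] C.E i) : Prop where
  h1 : IsHom A B ι
  h2 : IsHom B C π
  inj : ∀ i, Function.Injective (ι i)
  surj : ∀ i, Function.Surjective (π i)
  zero : ∀ i a, π i (ι i a) = 0
  ex : ∀ i b, π i b = 0 → ∃ a, ι i a = b

lemma ses_sub (X : LRep k Q) (U) (hU : Inv X U) :
    SES (sub X U hU) X (quo X U hU) (incl X U hU) (proj X U hU) where
  h1 := fun _ _ => rfl
  h2 := fun _ _ => rfl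
  inj _ := Subtype.val_injective
  surj _ := Submodule.mkQ_surjective _
  zero i a := (Submodule.Quotient.mk_eq_zero (U i)).2 a.2
  ex i b hb := ⟨⟨b, (Submodule.Quotient.mk_eq_zero (U i)).1 hb⟩, rfl⟩

noncomputable def sdv (X : LRep k Q) (U : ∀ i, Submodule k (X.E i)) : Fin Q.n → ℤ :=
  fun i => (Module.finrank k (U i) : ℤ)

lemma dv_sub (X : LRep k Q) (U) (hU : Inv X U) : dv (sub X U hU) = sdv X U := rfl

lemma dv_quo (X : LRep k Q) (U) (hU : Inv X U) : sdv X U + dv (quo X U hU) = dv X := by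
  funext i
  have := (U i).finrank_quotient_add_finrank
  simp only [sdv, dv, quo, Pi.add_apply]
  omega

noncomputable def tot (X : LRep k Q) : ℕ := ∑ i, Module.finrank k (X.E i)

lemma inv_ker {X Y : LRep k Q} {f} (hf : IsHom X Y f) :
    Inv X (fun i => LinearMap.ker (f i)) := by
  intro x v hv
  simp at hv ⊢
  rw [hf x v, hv, map_zero]

lemma inv_range {X Y : LRep k Q} {f} (hf : IsHom X Y f) :
    Inv Y (fun i => LinearMap.range (f i)) := by
  rintro x _ ⟨v, rfl⟩
  exact ⟨X.φ x v, hf x v⟩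

lemma tot_sub_lt {X : LRep k Q} {U} (hU : Inv X U) (h : ∃ i, U i ≠ ⊤) : tot (sub X U hU) < tot X := by
  obtain ⟨i, hi⟩ := h
  exact Finset.sum_lt_sum (fun j _ => Submodule.finrank_le (U j))
    ⟨i, Finset.mem_univ i, Submodule.finrank_lt hi⟩

lemma tot_quo_lt {X : LRep k Q} {U} (hU : Inv X U) (h : ∃ i, U i ≠ ⊥) : tot (quo X U hU) < tot X := by
  obtain ⟨i, hi⟩ := h
  have key : ∀ j, Module.finrank k ((quo X U hU).E j) + Module.finrank k (U j) =
    Module.finrank k (X.E j) := fun j => (U j).finrank_quotient_add_finrank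
  refine Finset.sum_lt_sum (fun j _ => by have := key j; omega) ⟨i, Finset.mem_univ i, ?_⟩
  have h1 := key i
  have : Module.finrank k (U i) ≠ 0 := fun h0 => hi (Submodule.finrank_eq_zero.1 h0)
  omega

lemma lift_of_zero {B C N : Type} [AddCommGroup B] [AddCommGroup C]
    [AddCommGroup N] [Module k B] [Module k C] [Module k N]
    (π : B →ₗ[k] C) (hπ : Function.Surjective π) (c : B →ₗ[k] N)
    (h : ∀ b, π b = 0 → c b = 0) : ∃ c' : C →ₗ[k] N, ∀ b, c' (π b) = c b := by
  obtain ⟨g, hg⟩ := LinearMap.exists_rightInverse_of_surjective π (LinearMap.range_eq_top.2 hπ)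
  refine ⟨c ∘ₗ g, fun b => ?_⟩
  have hg' : ∀ v, π (g v) = v := fun v => LinearMap.congr_fun hg v
  have := h (g (π b) - b) (by rw [map_sub, hg', sub_self])
  rw [map_sub, sub_eq_zero] at this
  exact this

lemma extZ_mid_left {A B C N : LRep k Q} {ι π} (S : SES A B C ι π) (h1 : ExtZ A N)
    (h2 : ExtZ C N) : ExtZ B N := by
  intro c
  obtain ⟨F, hF⟩ := h1 (fun x => c x ∘ₗ ι (Q.src x))
  have he : ∀ i, ∃ g : B.E i →ₗ[k] A.E i, g ∘ₗ ι i = LinearMap.id := fun i =>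
    LinearMap.exists_leftInverse_of_injective _ (LinearMap.ker_eq_bot.2 (S.inj i))
  choose g hg using he
  have hg' : ∀ i u, g i (ι i u) = u := fun i u => LinearMap.congr_fun (hg i) u
  have hl : ∀ x, ∃ c' : C.E (Q.src x) →ₗ[k] N.E (Q.tgt x), ∀ b,
      c' (π _ b) = (c x - D B N (fun i => F i ∘ₗ g i) x) b := by
    intro x
    refine lift_of_zero _ (S.surj _) _ (fun b hb => ?_)
    obtain ⟨a, rfl⟩ := S.ex _ b hb
    rw [LinearMap.sub_apply, D_apply, ← S.h1]
    simp only [LinearMap.comp_apply, hg']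
    rw [← hF x a]; simp
  choose c' hc' using hl
  obtain ⟨H, hH⟩ := h2 c'
  refine ⟨fun i => F i ∘ₗ g i + H i ∘ₗ π i, fun x v => ?_⟩
  have := hH x (π _ v)
  rw [hc', ← S.h2, LinearMap.sub_apply, D_apply, sub_eq_iff_eq_add] at this
  rw [this]
  simp only [LinearMap.add_apply, LinearMap.comp_apply, map_add]
  abel

lemma extZ_mid_right {A B C X : LRep k Q} {ι π} (S : SES A B C ι π) (h1 : ExtZ X A)
    (h2 : ExtZ X C) : ExtZ X B := by
  intro c
  obtain ⟨F, hF⟩ := h2 (fun x => π (Q.tgt x) ∘ₗ c x)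
  have he : ∀ i, ∃ g : C.E i →ₗ[k] B.E i, π i ∘ₗ g = LinearMap.id := fun i =>
    LinearMap.exists_rightInverse_of_surjective _ (LinearMap.range_eq_top.2 (S.surj i))
  choose g hg using he
  have hg' : ∀ i v, π i (g i v) = v := fun i v => LinearMap.congr_fun (hg i) v
  have he : ∀ i, ∃ r : B.E i →ₗ[k] A.E i, r ∘ₗ ι i = LinearMap.id := fun i =>
    LinearMap.exists_leftInverse_of_injective _ (LinearMap.ker_eq_bot.2 (S.inj i))
  choose r hr using he
  have hr' : ∀ i u, r i (ι i u) = u := fun i u => LinearMap.congr_fun (hr i) u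
  have hr2 : ∀ i b, π i b = 0 → ι i (r i b) = b := by
    intro i b hb
    obtain ⟨a, rfl⟩ := S.ex i b hb
    rw [hr']
  obtain ⟨H, hH⟩ := h1 (fun x => r _ ∘ₗ (c x - D X B (fun i => g i ∘ₗ F i) x))
  refine ⟨fun i => g i ∘ₗ F i + ι i ∘ₗ H i, fun x v => ?_⟩
  have := congrArg (ι (Q.tgt x)) (hH x v)
  rw [LinearMap.comp_apply, hr2, map_sub, S.h1, LinearMap.sub_apply, D_apply,
    sub_eq_iff_eq_add] at this
  · rw [this]
    simp only [LinearMap.add_apply, LinearMap.comp_apply, map_add]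
    abel
  · rw [LinearMap.sub_apply, D_apply, map_sub, map_sub, S.h2]
    simp only [LinearMap.comp_apply, hg']
    rw [← hF x v]; simp

/-- A splitting. -/
lemma split {A B C : LRep k Q} {ι π} (S : SES A B C ι π) (h : ExtZ C A) :
    ∃ p, IsHom B A p ∧ ∀ i u, p i (ι i u) = u := by
  have he : ∀ i, ∃ r : B.E i →ₗ[k] A.E i, r ∘ₗ ι i = LinearMap.id := fun i =>
    LinearMap.exists_leftInverse_of_injective _ (LinearMap.ker_eq_bot.2 (S.inj i))
  choose r hr using he
  have hr' : ∀ i u, r i (ι i u) = u := fun i u => LinearMap.congr_fun (hr i) u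
  have hl : ∀ x, ∃ c' : C.E (Q.src x) →ₗ[k] A.E (Q.tgt x), ∀ b,
      c' (π _ b) = D B A r x b := by
    intro x
    refine lift_of_zero _ (S.surj _) _ (fun b hb => ?_)
    obtain ⟨a, rfl⟩ := S.ex _ b hb
    rw [D_apply, ← S.h1, hr', hr', sub_self]
  choose c' hc' using hl
  obtain ⟨G, hG⟩ := h c'
  refine ⟨fun i => r i - G i ∘ₗ π i, fun x v => ?_, fun i u => ?_⟩
  · have := hG x (π _ v)
    rw [hc', ← S.h2, D_apply] at this
    simp only [LinearMap.sub_apply, LinearMap.comp_apply, map_sub]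
    rw [← sub_eq_zero] at this ⊢
    rw [← this]; abel
  · rw [LinearMap.sub_apply, LinearMap.comp_apply, S.zero, map_zero, sub_zero, hr']

end SSNR
namespace SSNR
variable {k : Type} [Field k] {Q : FinQuiver}

section LinAlg
variable {E F : Type} [AddCommGroup E] [AddCommGroup F] [Module k E] [Module k F]
  [FiniteDimensional k E] [FiniteDimensional k F]

lemma cofin_surj (A B : E →ₗ[k] F) (hA : Function.Surjective A) :
    {t : k | ¬ Function.Surjective (A + t • B)}.Finite := by
  obtain ⟨S, hS⟩ := LinearMap.exists_rightInverse_of_surjective A (LinearMap.range_eq_top.2 hA)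
  let C : Module.End k F := B ∘ₗ S
  have hfin : {μ : k | Module.End.HasEigenvalue C μ}.Finite := Module.End.finite_hasEigenvalue C
  refine (hfin.image (fun μ => -μ⁻¹)).subset ?_
  intro t ht
  have h1 : ¬ Function.Injective (LinearMap.id + t • C : F →ₗ[k] F) := by
    intro hi
    apply ht
    have hs := LinearMap.injective_iff_surjective.1 hi
    intro z
    obtain ⟨y, hy⟩ := hs z
    refine ⟨S y, ?_⟩
    have h2 : A (S y) = y := LinearMap.congr_fun hS y
    simpa [h2, C] using hy
  rw [← LinearMap.ker_eq_bot, LinearMap.ker_eq_bot'] at h1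
  push Not at h1
  obtain ⟨y, hy, hy0⟩ := h1
  simp at hy
  have ht0 : t ≠ 0 := by
    rintro rfl
    simp at hy; exact hy0 hy
  refine ⟨-t⁻¹, ?_, by simp⟩
  refine Module.End.hasEigenvalue_of_hasEigenvector (x := y) ⟨?_, hy0⟩
  rw [Module.End.mem_eigenspace_iff]
  have : C y = t⁻¹ • (t • C y) := by rw [smul_smul, inv_mul_cancel₀ ht0, one_smul]
  rw [this, eq_neg_of_add_eq_zero_right hy]; simp

lemma cofin_inj (C : F →ₗ[k] F) (b0 : F) (T : F →ₗ[k] E →ₗ[k] E) :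
    {t : k | ¬ ∀ y, y + t • C y = b0 → ∀ w, w - t • T y w = 0 → w = 0}.Finite := by
  let b := Module.finBasis k E
  let n := Module.finrank k E
  let L0 : ((Fin n → F) × E) →ₗ[k] ((Fin n → F) × E) :=
    { toFun := fun p => (fun j => p.1 j - b.repr p.2 j • b0, p.2)
      map_add' := by
        intro p q; ext1
        · funext j; simp [add_smul]; abel
        · simp
      map_smul' := by
        intro c p; ext1
        · funext j; simp [smul_sub, smul_smul]
        · simp }
  let L1 : ((Fin n → F) × E) →ₗ[k] ((Fin n → F) × E) :=
    { toFun := fun p => (fun j => C (p.1 j), -∑ j, T (p.1 j) (b j))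
      map_add' := by
        intro p q; ext1
        · funext j; simp
        · simp [Finset.sum_add_distrib]; abel
      map_smul' := by
        intro c p; ext1
        · funext j; simp
        · simp [Finset.smul_sum] }
  have hs : Function.Surjective L0 := by
    rintro ⟨z, w⟩
    exact ⟨(fun j => z j + b.repr w j • b0, w), by simp [L0]⟩
  refine (cofin_surj L0 L1 hs).subset ?_
  intro t ht hsurj
  apply ht
  intro y hy w hw
  have hinj := LinearMap.injective_iff_surjective.2 hsurj
  have h0 : (L0 + t • L1) (fun j => b.repr w j • y, w) = 0 := by
    have e : ∑ j, T (b.repr w j • y) (b j) = T y w := by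
      have h := congrArg (T y) (b.sum_repr w)
      rw [map_sum] at h
      rw [← h]
      simp only [map_smul, LinearMap.smul_apply]
    ext1
    · funext j
      simp only [L0, L1, LinearMap.add_apply, LinearMap.smul_apply, LinearMap.coe_mk,
        AddHom.coe_mk, Prod.fst_add, Prod.smul_fst, Pi.add_apply, Pi.smul_apply, map_smul,
        Prod.fst_zero, Pi.zero_apply]
      rw [← hy]
      simp only [smul_add, smul_smul, mul_comm]; abel
    · simp only [L0, L1, LinearMap.add_apply, LinearMap.smul_apply, LinearMap.coe_mk,
        AddHom.coe_mk, Prod.snd_add, Prod.smul_snd, Prod.snd_zero]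
      rw [e, smul_neg, ← sub_eq_add_neg, hw]
  have := hinj (h0.trans (map_zero _).symm)
  exact congrArg Prod.snd this

lemma exists_good [Infinite k] {s : Set k} (hs : s.Finite) : ∃ t, t ∉ s := hs.exists_notMem

lemma exists_surj [Infinite k] (A B : E →ₗ[k] F) (hd : Module.finrank k E = Module.finrank k F)
    (x0 : E) (hx0 : x0 ≠ 0) (hA0 : A x0 = 0) (hker : ∀ y, A y = 0 → ∃ c : k, y = c • x0)
    (hB : ∀ y, A y ≠ B x0) : ∃ t : k, Function.Surjective (A + t • B) := by
  obtain ⟨ξ, hξ⟩ := LinearMap.exists_leftInverse_of_injective (LinearMap.toSpanSingleton k E x0)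
    (LinearMap.ker_toSpanSingleton k hx0)
  have hξ0 : ξ x0 = 1 := by
    have := LinearMap.congr_fun hξ 1
    simpa using this
  let C0 : E →ₗ[k] F := A + ξ.smulRight (B x0)
  let C1 : E →ₗ[k] F := B - ξ.smulRight (B x0)
  have hs : Function.Surjective C0 := by
    rw [← LinearMap.injective_iff_surjective_of_finrank_eq_finrank hd,
      ← LinearMap.ker_eq_bot, LinearMap.ker_eq_bot']
    intro y hy
    simp [C0] at hy
    have h1 : ξ y = 0 := by
      by_contra hne
      apply hB (-(ξ y)⁻¹ • y)
      rw [map_smul, eq_neg_of_add_eq_zero_left hy]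
      simp [smul_smul, hne]
    rw [h1] at hy
    obtain ⟨c, rfl⟩ := hker y (by simpa using hy)
    simp [hξ0] at h1
    simp [h1]
  obtain ⟨t, ht⟩ := exists_good ((cofin_surj C0 C1 hs).union (Set.finite_singleton (0 : k)))
  simp only [Set.mem_union, Set.mem_ofPred_eq, not_or, not_not, Set.mem_singleton_iff] at ht
  obtain ⟨ht1, ht0⟩ := ht
  refine ⟨t, fun z => ?_⟩
  obtain ⟨u, hu⟩ := ht1 z
  refine ⟨u - ξ u • x0 + (t⁻¹ * ξ u) • x0, ?_⟩
  rw [← hu]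
  simp only [C0, C1, LinearMap.add_apply, LinearMap.smul_apply, map_add, map_sub, map_smul, hA0,
    LinearMap.sub_apply, LinearMap.smulRight_apply, smul_zero, smul_add, smul_sub, smul_smul]
  rw [mul_right_comm, inv_mul_cancel₀ ht0, one_mul, mul_comm (ξ u) t]
  abel

end LinAlg

/-- change the structure maps of a representation -/
abbrev wφ (X : LRep k Q) (φ : ∀ x : Fin Q.a, X.E (Q.src x) →ₗ[k] X.E (Q.tgt x)) : LRep k Q where
  E := X.E
  φ := φ

def BR (X N : LRep k Q) (ψ : ∀ x : Fin Q.a, N.E (Q.src x) →ₗ[k] N.E (Q.tgt x)) :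
    (∀ i, X.E i →ₗ[k] N.E i) →ₗ[k] (∀ x, X.E (Q.src x) →ₗ[k] N.E (Q.tgt x)) where
  toFun f := fun x => -(ψ x ∘ₗ f (Q.src x))
  map_add' f g := by funext x; ext v; simp; abel
  map_smul' c f := by funext x; ext v; simp

def BL (X N : LRep k Q) (ψ : ∀ x : Fin Q.a, X.E (Q.src x) →ₗ[k] X.E (Q.tgt x)) :
    (∀ i, X.E i →ₗ[k] N.E i) →ₗ[k] (∀ x, X.E (Q.src x) →ₗ[k] N.E (Q.tgt x)) where
  toFun f := fun x => f (Q.tgt x) ∘ₗ ψ x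
  map_add' f g := by funext x; ext v; simp
  map_smul' c f := by funext x; ext v; simp

lemma D_wR (X N : LRep k Q) (φ ψ) (t : k) :
    D X (wφ N (φ + t • ψ)) = D X (wφ N φ) + t • BR X N ψ := by
  ext f x v
  simp only [D, BR, LinearMap.add_apply, LinearMap.smul_apply, LinearMap.coe_mk, AddHom.coe_mk,
    Pi.add_apply, Pi.smul_apply, LinearMap.sub_apply, LinearMap.comp_apply, LinearMap.neg_apply,
    smul_neg]
  abel

lemma D_wL (X N : LRep k Q) (φ ψ) (t : k) :
    D (wφ X (φ + t • ψ)) N = D (wφ X φ) N + t • BL X N ψ := by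
  ext f x v
  simp only [D, BL, LinearMap.add_apply, LinearMap.smul_apply, LinearMap.coe_mk, AddHom.coe_mk,
    Pi.add_apply, Pi.smul_apply, LinearMap.sub_apply, LinearMap.comp_apply,
    map_add, map_smul]
  abel

lemma open_right (X N : LRep k Q) (φ ψ) (h : ExtZ X (wφ N φ)) :
    {t : k | ¬ ExtZ X (wφ N (φ + t • ψ))}.Finite := by
  simp only [extZ_iff, D_wR] at h ⊢
  exact cofin_surj _ _ h

lemma open_left (X N : LRep k Q) (φ ψ) (h : ExtZ (wφ X φ) N) :
    {t : k | ¬ ExtZ (wφ X (φ + t • ψ)) N}.Finite := by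
  simp only [extZ_iff, D_wL] at h ⊢
  exact cofin_surj _ _ h

/-- transport to the same underlying spaces -/
lemma transport (X Y : LRep k Q) (h : dv Y = dv X) :
    ∃ φ, ∃ e : (∀ i, Y.E i ≃ₗ[k] X.E i), IsHom Y (wφ X φ) (fun i => (e i).toLinearMap) ∧
      IsHom (wφ X φ) Y (fun i => (e i).symm.toLinearMap) := by
  have he : ∀ i, Nonempty (Y.E i ≃ₗ[k] X.E i) := by
    intro i
    apply FiniteDimensional.nonempty_linearEquiv_of_finrank_eq
    have := congrFun h i
    simpa [dv] using this
  let e := fun i => (he i).some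
  refine ⟨fun x => (e _).toLinearMap ∘ₗ Y.φ x ∘ₗ (e _).symm.toLinearMap, e, ?_, ?_⟩
  · intro x v; simp
  · intro x v; simp

lemma line_sub_one {ι : Type} {M : ι → Type} [∀ i, AddCommGroup (M i)] [∀ i, Module k (M i)]
    (a b : ∀ i, M i) (t : k) : a + t • (b - a) = b + (1 - t) • (a - b) := by
  simp only [smul_sub, sub_smul, one_smul]; abel

lemma finite_one_sub {s : Set k} (hs : s.Finite) : {t : k | (1 - t) ∈ s}.Finite :=
  hs.preimage (f := fun t : k => 1 - t) (fun _ _ _ _ h => sub_right_injective h)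

lemma generic_two [Infinite k] {X0 X1 N0 N1 : LRep k Q} (hd : dv N1 = dv N0)
    (h0 : ExtZ X0 N0) (h1 : ExtZ X1 N1) : ∃ N, dv N = dv N0 ∧ ExtZ X0 N ∧ ExtZ X1 N := by
  obtain ⟨φ, e, he, -⟩ := transport N0 N1 hd
  have h1' : ExtZ X1 (wφ N0 φ) := extZ_of_surj _ he (fun i => (e i).surjective) h1
  have f0 := open_right X0 N0 N0.φ (φ - N0.φ) h0
  have f1 := finite_one_sub (open_right X1 N0 φ (N0.φ - φ) h1')
  obtain ⟨t, ht⟩ := exists_good (f0.union f1)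
  simp only [Set.mem_union, Set.mem_ofPred_eq, not_or, not_not] at ht
  refine ⟨wφ N0 (N0.φ + t • (φ - N0.φ)), rfl, ht.1, ?_⟩
  rw [line_sub_one]
  exact ht.2

lemma rigid_generic [Infinite k] {V W N : LRep k Q} (hd : dv W = dv V) (hV : ExtZ V V)
    (hW : ExtZ W N) : ExtZ V N := by
  obtain ⟨φ, e, -, he⟩ := transport V W hd
  have hW' : ExtZ (wφ V φ) N := extZ_of_inj _ he (fun i => (e i).symm.injective) hW
  have f1 := finite_one_sub (open_left V N φ (V.φ - φ) hW')
  obtain ⟨S, hS⟩ := LinearMap.exists_rightInverse_of_surjective (D V V)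
    (LinearMap.range_eq_top.2 ((extZ_iff V V).1 hV))
  have hS' : ∀ y, D V V (S y) = y := fun y => LinearMap.congr_fun hS y
  let B := BR V V (φ - V.φ)
  let C := B ∘ₗ S
  let x0 : ∀ i, V.E i →ₗ[k] V.E i := fun i => LinearMap.id
  have hx0 : D V V x0 = 0 := (D_eq_zero_iff _ _ _).2 (fun _ _ => rfl)
  have f2 := cofin_surj LinearMap.id C Function.surjective_id
  have f3 : ∀ i, _ := fun i => cofin_inj C (B x0) ((LinearMap.proj i) ∘ₗ S)
  have f3' := Set.finite_iUnion f3
  obtain ⟨t, ht⟩ := exists_good ((f1.union f2).union f3')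
  simp only [Set.mem_union, Set.mem_ofPred_eq, not_or, not_not, Set.mem_iUnion, not_exists] at ht
  obtain ⟨⟨h1, h2⟩, h3⟩ := ht
  rw [← line_sub_one] at h1
  obtain ⟨y, hy⟩ := h2 (B x0)
  have hy' : y + t • C y = B x0 := by simpa using hy
  refine extZ_of_inj (A := V) (B := wφ V (V.φ + t • (φ - V.φ))) (x0 - t • S y) ?_ ?_ h1
  · rw [← D_eq_zero_iff, D_wR]
    change (D V V) (x0 - t • S y) + t • B (x0 - t • S y) = 0
    rw [map_sub, map_sub, hx0, map_smul, map_smul, hS', ← hy']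
    change 0 - t • y + t • (y + t • C y - t • C y) = 0
    simp
  · intro i
    change Function.Injective ((x0 - t • S y) i)
    rw [← LinearMap.ker_eq_bot, LinearMap.ker_eq_bot']
    intro w hw
    exact h3 i y hy' w (by simpa [x0] using hw)

lemma brick_generic [Infinite k] (M0 : LRep k Q) (hq : Q.euler (dv M0) (dv M0) = 0)
    (hne : ∃ i, ∃ v : M0.E i, v ≠ 0)
    (hb : ∀ f, IsHom M0 M0 f → ∃ c : k, ∀ i v, f i v = c • v) :
    ∃ N, dv N = dv M0 ∧ ExtZ M0 N := by
  let x0 : ∀ i, M0.E i →ₗ[k] M0.E i := fun i => LinearMap.id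
  have hx0 : D M0 M0 x0 = 0 := (D_eq_zero_iff _ _ _).2 (fun _ _ => rfl)
  have hx0' : x0 ≠ 0 := by
    intro h
    obtain ⟨i, v, hv⟩ := hne
    exact hv (LinearMap.congr_fun (congrFun h i) v)
  have hd := finrank_C M0 M0
  rw [hq] at hd
  have hd' : Module.finrank k (∀ i, M0.E i →ₗ[k] M0.E i) =
      Module.finrank k (∀ x, M0.E (Q.src x) →ₗ[k] M0.E (Q.tgt x)) := by omega
  have hns : ¬ Function.Surjective (D M0 M0) := by
    rw [← LinearMap.injective_iff_surjective_of_finrank_eq_finrank hd']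
    intro hi
    exact hx0' (hi (hx0.trans (map_zero _).symm))
  simp only [Function.Surjective, not_forall, not_exists] at hns
  obtain ⟨ψ, hψ⟩ := hns
  obtain ⟨t, ht⟩ := exists_surj (D M0 M0) (BR M0 M0 ψ) hd' x0 hx0' hx0
    (fun y hy => by
      obtain ⟨c, hc⟩ := hb y ((D_eq_zero_iff _ _ _).1 hy)
      exact ⟨c, by funext i; ext v; rw [hc]; rfl⟩)
    (fun y hy => by
      apply hψ (-y)
      rw [map_neg, hy]
      funext x; ext v; simp [BR, x0])
  refine ⟨wφ M0 (M0.φ + t • ψ), rfl, ?_⟩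
  rw [extZ_iff, D_wR]
  exact ht

end SSNR
namespace SSNR
variable {k : Type} [Field k] {Q : FinQuiver}

def SubsLe (δ : Fin Q.n → ℤ) (X : LRep k Q) : Prop :=
  ∀ U, Inv X U → Q.euler δ (sdv X U) ≤ 0

def QuoPos (δ : Fin Q.n → ℤ) (Y : LRep k Q) : Prop :=
  ∀ U, Inv Y U → (∃ i, U i ≠ ⊤) → Q.euler δ (sdv Y U) < Q.euler δ (dv Y)

lemma sdv_top (X : LRep k Q) : sdv X (fun _ => ⊤) = dv X := by
  funext i; simp [sdv, dv]

lemma sdv_bot (X : LRep k Q) : sdv X (fun _ => ⊥) = 0 := by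
  funext i; simp [sdv]

lemma inv_top (X : LRep k Q) : Inv X (fun _ => ⊤) := fun _ _ _ => trivial

lemma inv_bot (X : LRep k Q) : Inv X (fun _ => ⊥) := by
  intro x v hv
  simp at hv ⊢
  simp [hv]

lemma inv_map {A B : LRep k Q} {f} (hf : IsHom A B f) {U} (hU : Inv A U) :
    Inv B (fun i => (U i).map (f i)) := by
  rintro x _ ⟨v, hv, rfl⟩
  exact ⟨A.φ x v, hU x v hv, hf x v⟩

lemma inv_comap {A B : LRep k Q} {f} (hf : IsHom A B f) {U} (hU : Inv B U) :
    Inv A (fun i => (U i).comap (f i)) := by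
  intro x v hv
  simp only [Submodule.mem_comap] at hv ⊢
  rw [hf]
  exact hU x _ hv

lemma sdv_map {A B : LRep k Q} {f : ∀ i, A.E i →ₗ[k] B.E i} (hf : ∀ i, Function.Injective (f i)) (U) :
    sdv B (fun i => (U i).map (f i)) = sdv A U := by
  funext i
  simp only [sdv]
  rw [(Submodule.equivMapOfInjective (f i) (hf i) (U i)).finrank_eq]

lemma dv_ses {A B C : LRep k Q} {ι π} (S : SES A B C ι π) : dv B = dv A + dv C := by
  funext i
  have h1 := LinearMap.finrank_range_add_finrank_ker (π i)
  have h2 := LinearMap.finrank_range_of_inj (S.inj i)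
  have h3 : LinearMap.range (ι i) = LinearMap.ker (π i) := by
    ext b
    exact ⟨fun ⟨a, ha⟩ => by rw [← ha]; exact S.zero i a, fun h => S.ex i b h⟩
  have h4 : Module.finrank k (LinearMap.range (π i)) = Module.finrank k (C.E i) := by
    rw [LinearMap.range_eq_top.2 (S.surj i), finrank_top]
  rw [h3] at h2
  simp only [dv, Pi.add_apply]
  omega

lemma sdv_comap {A B C : LRep k Q} {ι π} (S : SES A B C ι π) (U) :
    sdv B (fun i => (U i).comap (π i)) = dv A + sdv C U := by
  have h0 := dv_ses S
  funext i
  have h1 := congrFun h0 i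
  have h2 := (U i).finrank_quotient_add_finrank
  have h3 := LinearMap.finrank_range_add_finrank_ker ((U i).mkQ ∘ₗ π i)
  have hs : Function.Surjective ((U i).mkQ ∘ₗ π i) := by
    rw [LinearMap.coe_comp]; exact (Submodule.mkQ_surjective (U i)).comp (S.surj i)
  rw [LinearMap.range_eq_top.2 hs,
    LinearMap.ker_comp, Submodule.ker_mkQ, finrank_top] at h3
  simp only [dv, sdv, Pi.add_apply] at h1 ⊢
  omega

lemma sdv_split {A B C : LRep k Q} {ι π} (S : SES A B C ι π) (U) :
    sdv B U = sdv A (fun i => (U i).comap (ι i)) + sdv C (fun i => (U i).map (π i)) := by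
  funext i
  have h1 := LinearMap.finrank_range_add_finrank_ker ((π i).domRestrict (U i))
  have h2 : LinearMap.range ((π i).domRestrict (U i)) = (U i).map (π i) :=
    LinearMap.range_domRestrict _ _
  have h3 : Module.finrank k (LinearMap.ker ((π i).domRestrict (U i))) =
      Module.finrank k ((U i).comap (ι i)) := by
    have h4 : (LinearMap.ker ((π i).domRestrict (U i))).map (U i).subtype =
        ((U i).comap (ι i)).map (ι i) := by
      ext b
      simp only [Submodule.mem_map, LinearMap.mem_ker, LinearMap.domRestrict_apply]
      constructor
      · rintro ⟨u, hu, rfl⟩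
        obtain ⟨a, ha⟩ := S.ex i _ hu
        exact ⟨a, by simp [Submodule.mem_comap, ha], ha⟩
      · rintro ⟨a, ha, rfl⟩
        exact ⟨⟨ι i a, ha⟩, S.zero i a, rfl⟩
    rw [(Submodule.equivMapOfInjective (ι i) (S.inj i) ((U i).comap (ι i))).finrank_eq,
      ← Submodule.finrank_map_subtype_eq, h4]
  rw [h2, h3] at h1
  simp only [sdv, Pi.add_apply]
  omega

lemma subsLe_inj {δ : Fin Q.n → ℤ} {A B : LRep k Q} {f} (hf : IsHom A B f)
    (hi : ∀ i, Function.Injective (f i)) (h : SubsLe δ B) : SubsLe δ A := by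
  intro U hU
  rw [← sdv_map hi]
  exact h _ (inv_map hf hU)

lemma subsLe_ext {δ : Fin Q.n → ℤ} {A B C : LRep k Q} {ι π} (S : SES A B C ι π)
    (h1 : SubsLe δ A) (h2 : SubsLe δ C) : SubsLe δ B := by
  intro U hU
  rw [sdv_split S, euler_add_right]
  exact add_nonpos (h1 _ (inv_comap S.h1 hU)) (h2 _ (inv_map S.h2 hU))

lemma quoPos_quo {δ : Fin Q.n → ℤ} {A B C : LRep k Q} {ι π} (S : SES A B C ι π)
    (h : QuoPos δ B) : QuoPos δ C := by
  intro U hU ⟨i, hi⟩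
  have := h _ (inv_comap S.h2 hU) ⟨i, fun h0 => hi (by
    rw [eq_top_iff]
    intro c _
    obtain ⟨b, rfl⟩ := S.surj i c
    have : b ∈ (U i).comap (π i) := by rw [h0]; trivial
    exact this)⟩
  rw [sdv_comap S, dv_ses S, euler_add_right, euler_add_right] at this
  linarith

/-- factor through the quotient by the kernel -/
lemma exists_inj_quo {X Y : LRep k Q} {f} (hf : IsHom X Y f) :
    ∃ g, IsHom (quo X _ (inv_ker hf)) Y g ∧ ∀ i, Function.Injective (g i) := by
  have S := ses_sub X _ (inv_ker hf)
  have hz : ∀ i b, proj X _ (inv_ker hf) i b = 0 → f i b = 0 := by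
    intro i b hb
    obtain ⟨a, rfl⟩ := S.ex i b hb
    exact a.2
  have hz' : ∀ i b, f i b = 0 → proj X _ (inv_ker hf) i b = 0 := by
    intro i b hb
    exact S.zero i ⟨b, hb⟩
  have : ∀ i, ∃ g : (quo X _ (inv_ker hf)).E i →ₗ[k] Y.E i,
      ∀ b, g (proj X _ (inv_ker hf) i b) = f i b := fun i => lift_of_zero _ (S.surj i) _ (hz i)
  choose g hg using this
  refine ⟨g, ?_, ?_⟩
  · intro x v
    obtain ⟨b, rfl⟩ := S.surj _ v
    rw [← S.h2, hg, hg, hf]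
  · intro i
    rw [← LinearMap.ker_eq_bot, LinearMap.ker_eq_bot']
    intro v hv
    obtain ⟨b, rfl⟩ := S.surj _ v
    rw [hg] at hv
    exact hz' i b hv

/-- corestrict to the range -/
lemma exists_surj_range {X Y : LRep k Q} {f} (hf : IsHom X Y f) :
    ∃ g, IsHom X (sub Y _ (inv_range hf)) g ∧ (∀ i, Function.Surjective (g i)) ∧
      ∀ i v, incl Y _ (inv_range hf) i (g i v) = f i v := by
  let g : ∀ i, X.E i →ₗ[k] (sub Y _ (inv_range hf)).E i := fun i => (f i).rangeRestrict
  refine ⟨g, ?_, ?_, ?_⟩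
  · intro x v
    exact Subtype.ext (hf x v)
  · intro i
    exact LinearMap.surjective_rangeRestrict (f i)
  · intro i v; rfl

lemma not_homZ {X Y : LRep k Q} (h : ¬ HomZ X Y) :
    ∃ f, IsHom X Y f ∧ ∃ i v, f i v ≠ 0 := by
  unfold HomZ at h
  push Not at h
  exact h

section Key

lemma two [Infinite k] {δ : Fin Q.n → ℤ} (hanti : ∀ x, Q.euler x δ = - Q.euler δ x)
  {M0 N1 : LRep k Q} (hM0 : dv M0 = δ) (hN1 : dv N1 = δ) (hE : ExtZ M0 N1)
    (X : LRep k Q) (hX : SubsLe δ X) : ∃ N, dv N = δ ∧ ExtZ X N := by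
  induction' hn : tot X using Nat.strong_induction_on with n ih generalizing X
  by_cases hh : HomZ X M0
  · refine ⟨M0, hM0, extZ_of_homZ hh ?_⟩
    rw [hM0, hanti, ← sdv_top]
    have := hX _ (inv_top X)
    linarith
  · obtain ⟨f, hf, i, v, hv⟩ := not_homZ hh
    have S := ses_sub X _ (inv_ker hf)
    have hlt := tot_sub_lt (inv_ker hf) ⟨i, fun h => hv (by
      have : v ∈ LinearMap.ker (f i) := by rw [h]; trivial
      exact this)⟩
    obtain ⟨N', hN', hE'⟩ := ih _ (hn ▸ hlt) _ (subsLe_inj S.h1 S.inj hX) rfl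
    obtain ⟨g, hg, hgi⟩ := exists_inj_quo hf
    obtain ⟨N, hN, h1, h2⟩ := generic_two (hN1.trans hN'.symm) hE' (extZ_of_inj g hg hgi hE)
    exact ⟨N, hN.trans hN', extZ_mid_left S h1 h2⟩

lemma star [Infinite k] {δ : Fin Q.n → ℤ} (hanti : ∀ x, Q.euler x δ = - Q.euler δ x)
  {M0 N1 : LRep k Q} (hM0 : dv M0 = δ) (hN1 : dv N1 = δ) (hE : ExtZ M0 N1)
    (X Y : LRep k Q) (hX : SubsLe δ X) (hY : QuoPos δ Y) : ExtZ X Y := by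
  obtain ⟨N, hN, hXN⟩ := two hanti hM0 hN1 hE X hX
  induction' hn : tot Y using Nat.strong_induction_on with n ih generalizing Y
  by_cases hh : HomZ N Y
  · by_cases hne : ∃ i, (⊥ : Submodule k (Y.E i)) ≠ ⊤
    · have h1 := hY _ (inv_bot Y) hne
      have h2 := euler_nonpos_of_homZ hh
      rw [sdv_bot, euler_zero_right] at h1
      rw [hN] at h2
      linarith
    · push Not at hne
      have hz : ∀ i (v : Y.E i), v = 0 := by
        intro i v
        have : v ∈ (⊥ : Submodule k (Y.E i)) := by rw [hne i]; trivial
        simpa using this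
      intro c
      exact ⟨fun i => 0, fun x v => by rw [hz _ (c x v)]; simp⟩
  · obtain ⟨f, hf, i, v, hv⟩ := not_homZ hh
    have S := ses_sub Y _ (inv_range hf)
    have hlt := tot_quo_lt (inv_range hf) ⟨i, fun h => hv (by
      have : f i v ∈ LinearMap.range (f i) := ⟨v, rfl⟩
      rw [h] at this
      simpa using this)⟩
    obtain ⟨g, hg, hgs, -⟩ := exists_surj_range hf
    exact extZ_mid_right S (extZ_of_surj g hg hgs hXN)
      (ih _ (hn ▸ hlt) _ (quoPos_quo S hY) rfl)

def LIndec (X : LRep k Q) : Prop :=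
  (∃ i, ∃ v : X.E i, v ≠ 0) ∧ ∀ e, IsHom X X e → (∀ i v, e i (e i v) = e i v) →
    (∀ i v, e i v = 0) ∨ (∀ i v, e i v = v)

lemma exists_max (δ : Fin Q.n → ℤ) (X : LRep k Q) : ∃ U, Inv X U ∧
    (∀ U', Inv X U' → Q.euler δ (sdv X U') ≤ Q.euler δ (sdv X U)) ∧
    (∀ U', Inv X U' → Q.euler δ (sdv X U') = Q.euler δ (sdv X U) →
      ∑ i, sdv X U i ≤ ∑ i, sdv X U' i) := by
  let s : Set (Fin Q.n → ℤ) := {e | ∃ U, Inv X U ∧ sdv X U = e}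
  have hs : s.Finite := by
    refine (Set.finite_Icc (0 : Fin Q.n → ℤ) (dv X)).subset ?_
    rintro _ ⟨U, -, rfl⟩
    exact ⟨fun i => by simp [sdv], fun i => by
      simp only [sdv, dv]; exact_mod_cast Submodule.finrank_le (U i)⟩
  have hsne : s.Nonempty := ⟨_, _, inv_bot X, rfl⟩
  obtain ⟨e, he, hmax⟩ := Set.exists_max_image s (fun e => toLex (Q.euler δ e, -∑ i, e i)) hs hsne
  obtain ⟨U, hU, rfl⟩ := he
  have key : ∀ U', Inv X U' → Q.euler δ (sdv X U') < Q.euler δ (sdv X U) ∨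
      (Q.euler δ (sdv X U') = Q.euler δ (sdv X U) ∧ -∑ i, sdv X U' i ≤ -∑ i, sdv X U i) := by
    intro U' hU'
    have := hmax _ ⟨U', hU', rfl⟩
    simpa [Prod.Lex.toLex_le_toLex] using this
  refine ⟨U, hU, fun U' hU' => ?_, fun U' hU' h => ?_⟩
  · rcases key U' hU' with h | h
    · exact h.le
    · exact h.1.le
  · rcases key U' hU' with h' | h'
    · omega
    · linarith [h'.2]

lemma indec_cases [Infinite k] {δ : Fin Q.n → ℤ} (hanti : ∀ x, Q.euler x δ = - Q.euler δ x)
  {M0 N1 : LRep k Q} (hM0 : dv M0 = δ) (hN1 : dv N1 = δ) (hE : ExtZ M0 N1)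
    (X : LRep k Q) (hX : LIndec X) : SubsLe δ X ∨ QuoPos δ X := by
  obtain ⟨U, hU, hmax, hmin⟩ := exists_max δ X
  have S := ses_sub X U hU
  have h1 : SubsLe δ (quo X U hU) := by
    intro W hW
    have := hmax _ (inv_comap S.h2 hW)
    rw [sdv_comap S, euler_add_right, dv_sub] at this
    linarith
  have hstrict : ∀ W, Inv X W → (∀ i, W i ≤ U i) → (∃ i, W i ≠ U i) →
      Q.euler δ (sdv X W) < Q.euler δ (sdv X U) := by
    intro W hW hle ⟨i, hi⟩
    refine lt_of_le_of_ne (hmax W hW) (fun heq => ?_)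
    have := hmin W hW heq
    have hlt : ∑ i, sdv X W i < ∑ i, sdv X U i := by
      refine Finset.sum_lt_sum (fun j _ => ?_) ⟨i, Finset.mem_univ i, ?_⟩
      · simp only [sdv]; exact_mod_cast Submodule.finrank_mono (hle j)
      · simp only [sdv]; exact_mod_cast Submodule.finrank_lt_finrank_of_lt (lt_of_le_of_ne (hle i) hi)
    omega
  have h2 : QuoPos δ (sub X U hU) := by
    intro W hW ⟨i, hi⟩
    rw [← sdv_map S.inj, dv_sub]
    refine hstrict _ (inv_map S.h1 hW) ?_ ⟨i, ?_⟩
    · rintro j _ ⟨w, -, rfl⟩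
      exact w.2
    · intro heq
      apply hi
      rw [eq_top_iff]
      intro w _
      have : incl X U hU i w ∈ (W i).map (incl X U hU i) := by rw [heq]; exact w.2
      obtain ⟨w', hw', he⟩ := this
      rw [← S.inj i he]; exact hw'
  obtain ⟨p, hp, hpi⟩ := split S (star hanti hM0 hN1 hE _ _ h1 h2)
  rcases hX.2 (fun i => incl X U hU i ∘ₗ p i) (fun x v => by
    simp only [LinearMap.comp_apply]; rw [hp, S.h1]) (fun i v => by
    simp only [LinearMap.comp_apply]; rw [hpi]) with h | h
  · left
    have hb : U = fun _ => ⊥ := by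
      funext i
      rw [eq_bot_iff]
      intro u hu
      have e1 := h i u
      have e2 := hpi i ⟨u, hu⟩
      have e3 := congrArg (incl X U hU i) e2
      exact e3.symm.trans e1
    intro W hW
    have := hmax W hW
    rwa [hb, sdv_bot, euler_zero_right] at this
  · right
    have ht : U = fun _ => ⊤ := by
      funext i
      rw [eq_top_iff]
      intro u _
      rw [← h i u]
      exact (p i u).2
    intro W hW ⟨i, hi⟩
    have := hstrict W hW (by simp [ht]) ⟨i, by simpa [ht] using hi⟩
    rwa [ht, sdv_top] at this

def LSummand (L X : LRep k Q) : Prop :=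
  ∃ f, IsHom L X f ∧ ∃ g, IsHom X L g ∧ ∀ i v, g i (f i v) = v

lemma LSummand.trans {A B C : LRep k Q} (h1 : LSummand A B) (h2 : LSummand B C) :
    LSummand A C := by
  obtain ⟨f, hf, g, hg, h⟩ := h1
  obtain ⟨f', hf', g', hg', h'⟩ := h2
  exact ⟨fun i => f' i ∘ₗ f i, fun x v => by simp [hf x, hf' x], fun i => g i ∘ₗ g' i,
    fun x v => by simp [hg x, hg' x], fun i v => by simp [h, h']⟩

lemma regular_semistable [Infinite k] {δ : Fin Q.n → ℤ} (hanti : ∀ x, Q.euler x δ = - Q.euler δ x)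
  {M0 N1 : LRep k Q} (hM0 : dv M0 = δ) (hN1 : dv N1 = δ) (hE : ExtZ M0 N1)
    (X : LRep k Q)
    (hX : ∀ L, LSummand L X → LIndec L → Q.euler δ (dv L) = 0) :
    SubsLe δ X ∧ Q.euler δ (dv X) = 0 := by
  induction' hn : tot X using Nat.strong_induction_on with n ih generalizing X
  by_cases hI : LIndec X
  · have h0 := hX X ⟨fun i => LinearMap.id, fun _ _ => rfl, fun i => LinearMap.id,
      fun _ _ => rfl, fun _ _ => rfl⟩ hI
    refine ⟨?_, h0⟩
    rcases indec_cases hanti hM0 hN1 hE X hI with h | h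
    · exact h
    · exfalso
      obtain ⟨i, v, hv⟩ := hI.1
      have := h _ (inv_bot X) ⟨i, fun hb => hv (by
        have : v ∈ (⊥ : Submodule k (X.E i)) := by rw [hb]; trivial
        simpa using this)⟩
      rw [sdv_bot, euler_zero_right] at this
      omega
  by_cases hne : ∃ i, ∃ v : X.E i, v ≠ 0
  · have : ∃ e, IsHom X X e ∧ (∀ i v, e i (e i v) = e i v) ∧
        (∃ i v, e i v ≠ 0) ∧ (∃ i v, e i v ≠ v) := by
      by_contra hcon
      apply hI
      refine ⟨hne, fun e he hid => ?_⟩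
      by_contra hor
      push Not at hor
      exact hcon ⟨e, he, hid, hor.1, hor.2⟩
    obtain ⟨e, he, hid, ⟨i, v, hv⟩, ⟨j, w, hw⟩⟩ := this
    have S := ses_sub X _ (inv_ker he)
    have s1 : LSummand (sub X _ (inv_ker he)) X := by
      let g : ∀ i, X.E i →ₗ[k] (sub X _ (inv_ker he)).E i := fun i =>
        LinearMap.codRestrict (LinearMap.ker (e i)) (LinearMap.id - e i) (fun v => by simp [hid])
      refine ⟨_, S.h1, g, fun x v => Subtype.ext ?_, fun i v => Subtype.ext ?_⟩
      · change X.φ x v - e _ (X.φ x v) = X.φ x (v - e _ v)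
        rw [map_sub, he]
      · change v.1 - e i v.1 = v.1
        rw [LinearMap.mem_ker.1 v.2, sub_zero]
    have s2 : LSummand (quo X _ (inv_ker he)) X := by
      have hl : ∀ i, ∃ g : (quo X _ (inv_ker he)).E i →ₗ[k] X.E i,
          ∀ b, g (proj X _ (inv_ker he) i b) = e i b := fun i =>
        lift_of_zero _ (S.surj i) _ (fun b hb => by
          obtain ⟨a, rfl⟩ := S.ex i b hb
          exact a.2)
      choose g hg using hl
      refine ⟨g, fun x v => ?_, _, S.h2, fun i v => ?_⟩
      · obtain ⟨b, rfl⟩ := S.surj _ v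
        rw [← S.h2, hg, hg, he]
      · obtain ⟨b, rfl⟩ := S.surj _ v
        rw [hg, ← sub_eq_zero, ← map_sub]
        exact S.zero i ⟨e i b - b, by simp [hid]⟩
    have l1 := tot_sub_lt (inv_ker he) ⟨i, fun h => hv (by
      have : v ∈ LinearMap.ker (e i) := by rw [h]; trivial
      exact this)⟩
    have l2 := tot_quo_lt (inv_ker he) ⟨j, fun h => hw (by
      have : w - e j w ∈ LinearMap.ker (e j) := by simp [hid]
      rw [h] at this
      have := (Submodule.mem_bot k).1 this
      exact (sub_eq_zero.1 this).symm)⟩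
    have i1 := ih _ (hn ▸ l1) _ (fun L hL => hX L (hL.trans s1)) rfl
    have i2 := ih _ (hn ▸ l2) _ (fun L hL => hX L (hL.trans s2)) rfl
    refine ⟨subsLe_ext S i1.1 i2.1, ?_⟩
    rw [dv_ses S, euler_add_right, i1.2, i2.2, add_zero]
  · push Not at hne
    have hz : ∀ U, sdv X U = 0 := by
      intro U; funext i
      have : U i = ⊥ := by rw [eq_bot_iff]; intro v _; simp [hne i v]
      simp [sdv, this]
    refine ⟨fun U _ => by rw [hz, euler_zero_right], ?_⟩
    rw [← sdv_top, hz, euler_zero_right]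

end Key
end SSNR
namespace SSNR
variable {k : Type} [Field k] {Q : FinQuiver}

/-- the linear representation attached to a matrix representation -/
def toL (M : QRep k Q) : LRep k Q where
  E i := Fin (M.d i) → k
  φ x := Matrix.mulVecLin (M.mat x)

/-- the linear maps attached to matrices -/
def toF {M N : QRep k Q} (f : ∀ i, Matrix (Fin (N.d i)) (Fin (M.d i)) k) :
    ∀ i, (toL M).E i →ₗ[k] (toL N).E i := fun i => Matrix.mulVecLin (f i)

lemma toF_apply {M N : QRep k Q} (f : ∀ i, Matrix (Fin (N.d i)) (Fin (M.d i)) k) (i v) :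
    toF (M := M) (N := N) f i v = (f i) *ᵥ v := rfl

lemma dv_toL (M : QRep k Q) : dv (toL M) = M.dimVec := by
  funext i
  have : Module.finrank k (Fin (M.d i) → k) = M.d i := by simp
  simp only [dv, QRep.dimVec]
  exact_mod_cast this

lemma toF_surj {M N : QRep k Q} (g : ∀ i, (toL M).E i →ₗ[k] (toL N).E i) :
    ∃ f : ∀ i, Matrix (Fin (N.d i)) (Fin (M.d i)) k, toF f = g := by
  refine ⟨fun i => LinearMap.toMatrix' (g i : (Fin (M.d i) → k) →ₗ[k] (Fin (N.d i) → k)), ?_⟩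
  funext i
  exact Matrix.toLin'_toMatrix' _

lemma mat_ext {m n : ℕ} {A B : Matrix (Fin m) (Fin n) k} (h : ∀ v, A *ᵥ v = B *ᵥ v) : A = B := by
  apply Matrix.toLin'.injective
  refine LinearMap.ext fun v => ?_
  simpa using h v

lemma isHom_iff {M N : QRep k Q} (f : ∀ i, Matrix (Fin (N.d i)) (Fin (M.d i)) k) :
    f ∈ QRep.homSpace M N ↔ IsHom (toL M) (toL N) (toF f) := by
  constructor
  · intro h x (v : Fin (M.d (Q.src x)) → k)
    change f (Q.tgt x) *ᵥ (M.mat x *ᵥ v) = N.mat x *ᵥ (f (Q.src x) *ᵥ v)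
    rw [Matrix.mulVec_mulVec, Matrix.mulVec_mulVec, h x]
  · intro h x
    apply mat_ext
    intro v
    rw [← Matrix.mulVec_mulVec, ← Matrix.mulVec_mulVec]
    exact h x v

lemma homDim_zero {M N : QRep k Q} : QRep.homDim M N = 0 ↔ HomZ (toL M) (toL N) := by
  rw [QRep.homDim, Submodule.finrank_eq_zero, Submodule.eq_bot_iff]
  constructor
  · intro h g hg i v
    obtain ⟨f, rfl⟩ := toF_surj g
    rw [h f ((isHom_iff f).2 hg)]
    exact Matrix.zero_mulVec (v : Fin (M.d i) → k)
  · intro h f hf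
    funext i
    apply mat_ext
    intro v
    exact (h _ ((isHom_iff f).1 hf) i v).trans (Matrix.zero_mulVec v).symm

lemma extDim_zero {M N : QRep k Q} : QRep.extDim M N = 0 ↔ ExtZ (toL M) (toL N) := by
  have h0 : QRep.extDim M N = 0 ↔ Function.Surjective (QRep.extMap M N) := by
    rw [← LinearMap.range_eq_top, QRep.extDim, Module.finrank_zero_iff,
      Submodule.Quotient.subsingleton_iff]
  rw [h0]
  constructor
  · intro h c
    obtain ⟨f, hf⟩ := h (fun x => LinearMap.toMatrix'
      (c x : (Fin (M.d (Q.src x)) → k) →ₗ[k] (Fin (N.d (Q.tgt x)) → k)))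
    refine ⟨toF f, fun x (v : Fin (M.d (Q.src x)) → k) => ?_⟩
    have h1 := congrFun hf x
    have h2 : c x v = LinearMap.toMatrix'
      (c x : (Fin (M.d (Q.src x)) → k) →ₗ[k] (Fin (N.d (Q.tgt x)) → k)) *ᵥ v :=
      (LinearMap.toMatrix'_mulVec _ _).symm
    rw [h2, ← h1]
    change (f (Q.tgt x) * M.mat x - N.mat x * f (Q.src x)) *ᵥ v =
      f (Q.tgt x) *ᵥ (M.mat x *ᵥ v) - N.mat x *ᵥ (f (Q.src x) *ᵥ v)
    rw [Matrix.sub_mulVec, Matrix.mulVec_mulVec, Matrix.mulVec_mulVec]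
  · intro h c
    obtain ⟨g, hg⟩ := h (fun x => Matrix.mulVecLin (c x))
    obtain ⟨f, rfl⟩ := toF_surj g
    refine ⟨f, ?_⟩
    funext x
    apply mat_ext
    intro v
    refine Eq.trans ?_ (hg x v).symm
    change (f (Q.tgt x) * M.mat x - N.mat x * f (Q.src x)) *ᵥ v =
      f (Q.tgt x) *ᵥ (M.mat x *ᵥ v) - N.mat x *ᵥ (f (Q.src x) *ᵥ v)
    rw [Matrix.sub_mulVec, Matrix.mulVec_mulVec, Matrix.mulVec_mulVec]

lemma nonzero_iff (M : QRep k Q) : (∃ i, M.d i ≠ 0) ↔ ∃ i, ∃ v : (toL M).E i, v ≠ 0 := by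
  constructor
  · rintro ⟨i, hi⟩
    refine ⟨i, (fun _ => 1 : Fin (M.d i) → k), fun h => ?_⟩
    have := congrFun h ⟨0, Nat.pos_of_ne_zero hi⟩
    exact one_ne_zero this
  · rintro ⟨i, v, hv⟩
    refine ⟨i, fun h => hv ?_⟩
    change Fin (M.d i) → k at v
    funext j
    exact absurd j.2 (by omega)

lemma indec_iff (M : QRep k Q) : QRep.Indec M ↔ LIndec (toL M) := by
  unfold QRep.Indec LIndec
  rw [nonzero_iff]
  refine and_congr_right fun _ => ?_
  constructor
  · intro h g hg hid
    obtain ⟨f, rfl⟩ := toF_surj g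
    rcases h f ((isHom_iff f).2 hg) (fun i => mat_ext fun v => by
      rw [← Matrix.mulVec_mulVec]; exact hid i v) with h | h
    · left; intro i v; rw [h]; exact Matrix.zero_mulVec (v : Fin (M.d i) → k)
    · right; intro i v; rw [h]; exact Matrix.one_mulVec (v : Fin (M.d i) → k)
  · intro h f hf hid
    rcases h _ ((isHom_iff f).1 hf) (fun i (v : Fin (M.d i) → k) => by
      change f i *ᵥ (f i *ᵥ v) = f i *ᵥ v
      rw [Matrix.mulVec_mulVec, hid]) with h | h
    · left; funext i; apply mat_ext; intro v; exact (h i v).trans (Matrix.zero_mulVec v).symm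
    · right; funext i; apply mat_ext; intro v; exact (h i v).trans (Matrix.one_mulVec v).symm

lemma summand_iff (L M : QRep k Q) : QRep.IsSummand L M ↔ LSummand (toL L) (toL M) := by
  constructor
  · rintro ⟨f, hf, g, hg, h⟩
    refine ⟨_, (isHom_iff f).1 hf, _, (isHom_iff g).1 hg, fun i (v : Fin (L.d i) → k) => ?_⟩
    change g i *ᵥ (f i *ᵥ v) = v
    rw [Matrix.mulVec_mulVec, h, Matrix.one_mulVec]
  · rintro ⟨f, hf, g, hg, h⟩
    obtain ⟨f, rfl⟩ := toF_surj f
    obtain ⟨g, rfl⟩ := toF_surj g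
    refine ⟨f, (isHom_iff f).2 hf, g, (isHom_iff g).2 hg, fun i => mat_ext fun v => ?_⟩
    rw [← Matrix.mulVec_mulVec, Matrix.one_mulVec]
    exact h i v

lemma endo_scalar {M : QRep k Q} (hI : QRep.Indec M) (h : QRep.homDim M M = 1)
    (g) (hg : IsHom (toL M) (toL M) g) : ∃ c : k, ∀ i v, g i v = c • v := by
  have h1 : (1 : ∀ i, Matrix (Fin (M.d i)) (Fin (M.d i)) k) ∈ QRep.homSpace M M := by
    intro x; simp
  obtain ⟨i, hi⟩ := hI.1
  have hne : (⟨1, h1⟩ : QRep.homSpace M M) ≠ 0 := by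
    intro h0
    have h2 := congrFun (congrArg Subtype.val h0) i
    have h3 := congrFun (congrFun h2 ⟨0, Nat.pos_of_ne_zero hi⟩) ⟨0, Nat.pos_of_ne_zero hi⟩
    simp at h3
  obtain ⟨f, rfl⟩ := toF_surj g
  obtain ⟨c, hc⟩ := (finrank_eq_one_iff_of_nonzero' _ hne).1 h ⟨f, (isHom_iff f).2 hg⟩
  refine ⟨c, fun i (v : Fin (M.d i) → k) => ?_⟩
  have h2 : f = c • 1 := (congrArg Subtype.val hc).symm
  rw [h2]
  change (c • (1 : Matrix (Fin (M.d i)) (Fin (M.d i)) k)) *ᵥ v = c • v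
  rw [Matrix.smul_mulVec, Matrix.one_mulVec]

/-- every linear representation comes from matrices -/
lemma exists_model (A : LRep k Q) : ∃ A' : QRep k Q, ∃ e : ∀ i, A.E i ≃ₗ[k] (toL A').E i,
    IsHom A (toL A') (fun i => (e i).toLinearMap) ∧
    IsHom (toL A') A (fun i => (e i).symm.toLinearMap) ∧ A'.dimVec = dv A := by
  let b : ∀ i, A.E i ≃ₗ[k] (Fin (Module.finrank k (A.E i)) → k) :=
    fun i => (Module.finBasis k (A.E i)).equivFun
  let A' : QRep k Q := ⟨fun i => Module.finrank k (A.E i), fun x =>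
    LinearMap.toMatrix' ((b (Q.tgt x)).toLinearMap ∘ₗ A.φ x ∘ₗ (b (Q.src x)).symm.toLinearMap)⟩
  have hφ : ∀ x, ∀ v : Fin (Module.finrank k (A.E (Q.src x))) → k,
      (toL A').φ x v = b (Q.tgt x) (A.φ x ((b (Q.src x)).symm v)) := by
    intro x v
    change LinearMap.toMatrix' ((b (Q.tgt x)).toLinearMap ∘ₗ A.φ x ∘ₗ (b (Q.src x)).symm.toLinearMap)
      *ᵥ v = _
    rw [LinearMap.toMatrix'_mulVec]
    rfl
  refine ⟨A', b, fun x v => ?_, fun x v => ?_, rfl⟩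
  · refine Eq.trans ?_ (hφ x (b _ v)).symm
    rw [LinearEquiv.symm_apply_apply]; rfl
  · refine (congrArg (b (Q.tgt x)).symm (hφ x v)).trans ?_
    rw [LinearEquiv.symm_apply_apply]; rfl

lemma lindec_transport {A B : LRep k Q} (e : ∀ i, A.E i ≃ₗ[k] B.E i)
    (h1 : IsHom A B (fun i => (e i).toLinearMap))
    (h2 : IsHom B A (fun i => (e i).symm.toLinearMap)) (h : LIndec A) : LIndec B := by
  obtain ⟨⟨i, v, hv⟩, h⟩ := h
  refine ⟨⟨i, e i v, by simpa using hv⟩, fun g hg hid => ?_⟩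
  have h1' : ∀ x v, e (Q.tgt x) (A.φ x v) = B.φ x (e (Q.src x) v) := h1
  have h2' : ∀ x v, (e (Q.tgt x)).symm (B.φ x v) = A.φ x ((e (Q.src x)).symm v) := h2
  rcases h (fun i => (e i).symm.toLinearMap ∘ₗ g i ∘ₗ (e i).toLinearMap)
    (fun x v => by
      simp only [LinearMap.comp_apply, LinearEquiv.coe_coe]
      rw [h1', hg, h2'])
    (fun i v => by simp [hid]) with h | h
  · left; intro i v
    have := h i ((e i).symm v)
    simpa using this
  · right; intro i v
    have := h i ((e i).symm v)
    simpa using this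

lemma regular_L {δ : Fin Q.n → ℤ} {M : QRep k Q} (h : QRep.RegularRep δ M) (L : LRep k Q)
    (hL : LSummand L (toL M)) (hI : LIndec L) : Q.euler δ (dv L) = 0 := by
  obtain ⟨L', e, h1, h2, h3⟩ := exists_model L
  have h4 := lindec_transport e h1 h2 hI
  rw [← h3]
  refine h L' ((summand_iff _ _).2 (LSummand.trans ?_ hL)) ((indec_iff _).2 h4)
  exact ⟨_, h2, _, h1, fun i v => by simp⟩

lemma semistable_L {d : Fin Q.n → ℤ} {M : QRep k Q} (h : QRep.SemiStable d M)
    (U) (hU : Inv (toL M) U) : Q.euler d (sdv (toL M) U) ≤ 0 := by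
  obtain ⟨L', e, h1, h2, h3⟩ := exists_model (sub (toL M) U hU)
  rw [← dv_sub _ _ hU, ← h3]
  obtain ⟨f, hf⟩ := toF_surj (M := L') (N := M) (fun i => incl (toL M) U hU i ∘ₗ (e i).symm.toLinearMap)
  have S := ses_sub (toL M) U hU
  refine h.2 L' ⟨f, (isHom_iff f).2 ?_, fun i => ?_⟩
  · rw [hf]
    intro x v
    have := h2 x v
    simp only [LinearMap.comp_apply]
    rw [this, S.h1]
  · have : Function.Injective (toF f i) := by
      rw [hf, LinearMap.coe_comp]
      exact (S.inj i).comp (e i).symm.injective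
    exact this

/-- zero representation -/
def zeroL (k : Type) [Field k] (Q : FinQuiver) : LRep k Q where
  E _ := PUnit
  φ _ := 0

/-- direct sum -/
def dsum (A B : LRep k Q) : LRep k Q where
  E i := A.E i × B.E i
  φ x := (A.φ x).prodMap (B.φ x)

lemma ses_dsum (A B : LRep k Q) : SES A (dsum A B) B
    (fun i => LinearMap.inl k (A.E i) (B.E i)) (fun i => LinearMap.snd k (A.E i) (B.E i)) where
  h1 := fun x v => by
    refine Prod.ext rfl ?_
    exact (map_zero (B.φ x)).symm
  h2 := fun _ _ => rfl
  inj _ := LinearMap.inl_injective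
  surj _ := LinearMap.snd_surjective
  zero _ _ := rfl
  ex i b hb := ⟨b.1, Prod.ext rfl (Eq.symm hb)⟩

lemma build_W [Infinite k] {δ : Fin Q.n → ℤ} (N0 : LRep k Q) (hN0 : dv N0 = δ)
    (l : List (Fin Q.n → ℤ)) (h : ∀ α ∈ l, ExtZero k Q α δ) :
    ∃ W N : LRep k Q, dv W = l.sum ∧ dv N = δ ∧ ExtZ W N := by
  induction l with
  | nil =>
    refine ⟨zeroL k Q, N0, ?_, hN0, ?_⟩
    · funext i
      have : Module.finrank k PUnit = 0 := Module.finrank_zero_of_subsingleton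
      simp only [dv, List.sum_nil, Pi.zero_apply]
      exact_mod_cast this
    · intro c
      refine ⟨fun _ => 0, fun x v => ?_⟩
      have : v = 0 := Subsingleton.elim (α := PUnit) _ _
      simp [this]
  | cons α l ih =>
    obtain ⟨W, N, hW, hN, hE⟩ := ih (fun β hβ => h β (List.mem_cons_of_mem _ hβ))
    obtain ⟨A, B, hA, hB, hAB⟩ := h α List.mem_cons_self
    rw [← dv_toL] at hA hB
    obtain ⟨N', hN', h1, h2⟩ := generic_two (hN.trans hB.symm) (extDim_zero.1 hAB) hE
    refine ⟨dsum (toL A) W, N', ?_, hN'.trans hB, extZ_mid_left (ses_dsum _ _) h1 h2⟩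
    rw [dv_ses (ses_dsum (toL A) W), hA, hW, List.sum_cons]

lemma extZero_nonneg {α β : Fin Q.n → ℤ} (h : ExtZero k Q α β) : 0 ≤ Q.euler α β := by
  obtain ⟨M, N, hM, hN, h⟩ := h
  have := euler_nonneg_of_extZ (extDim_zero.1 h)
  rwa [dv_toL, dv_toL, hM, hN] at this

lemma euler_list {δ : Fin Q.n → ℤ} (l : List (Fin Q.n → ℤ))
    (h : ∀ α ∈ l, Q.euler δ α = 0) : Q.euler δ l.sum = 0 := by
  induction l with
  | nil => rw [List.sum_nil, euler_zero_right]
  | cons α l ih =>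
    rw [List.sum_cons, euler_add_right, h α List.mem_cons_self,
      ih (fun β hβ => h β (List.mem_cons_of_mem _ hβ)), add_zero]

lemma core [Infinite k] {δ : Fin Q.n → ℤ} (hanti : ∀ x, Q.euler x δ = - Q.euler δ x)
    {M0 N1 : LRep k Q} (hM0 : dv M0 = δ) (hN1 : dv N1 = δ) (hE : ExtZ M0 N1)
    {d v : Fin Q.n → ℤ} {s : ℤ} (hs : 0 < s) (hd : d = v + s • δ) (hv : Q.euler δ v = 0)
    {V : QRep k Q} (hV : ExtZ (toL V) (toL V)) (hVd : dv (toL V) = v)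
    {N : LRep k Q} (hN : dv N = δ) (hVN : ExtZ (toL V) N) (M : QRep k Q) :
    QRep.SemiStable d M ↔ (QRep.RPerp V M ∧ QRep.RegularRep δ M) := by
  have hde : ∀ x, Q.euler d x = Q.euler v x + s * Q.euler δ x := by
    intro x; rw [hd, euler_add_left, euler_smul_left]
  have hHN : HomZ (toL V) N := by
    refine homZ_of_extZ hVN ?_
    rw [hVd, hN, hanti, hv]; simp
  have hSV : SubsLe δ (toL V) := by
    intro U hU
    have S := ses_sub (toL V) U hU
    have := euler_nonneg_of_extZ (extZ_of_inj _ S.h1 S.inj hVN)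
    rw [hN, hanti, dv_sub] at this
    linarith
  constructor
  · intro hss
    have hHM : HomZ (toL V) (toL M) := by
      intro f hf
      obtain ⟨g, hg, hgs, hgf⟩ := exists_surj_range hf
      have S := ses_sub (toL M) _ (inv_range hf)
      have e1 := semistable_L hss _ (inv_range hf)
      have e2 := euler_nonpos_of_homZ (homZ_of_surj g hg hgs hHN)
      have hE' := extZ_of_surj g hg hgs hV
      rw [hN, hanti, dv_sub] at e2
      rw [hde] at e1
      have e3 : Q.euler v (sdv (toL M) fun i => LinearMap.range (f i)) ≤ 0 := by nlinarith
      have hz := homZ_of_extZ hE' (by rw [hVd, dv_sub]; exact e3)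
      intro i v
      rw [← hgf, hz g hg, map_zero]
    have hreg : QRep.RegularRep δ M := by
      intro L hL hI
      obtain ⟨f, hf, g, hg, hgf⟩ := (summand_iff L M).1 hL
      have hfi : ∀ i, Function.Injective (f i) := fun i => (Function.LeftInverse.injective (hgf i))
      have hgs : ∀ i, Function.Surjective (g i) := fun i =>
        (Function.RightInverse.surjective (hgf i))
      have e1 := semistable_L hss _ (inv_map hf (inv_top _))
      rw [sdv_map hfi, sdv_top] at e1
      have e2 := semistable_L hss _ (inv_ker hg)
      have S : SES (sub (toL M) _ (inv_ker hg)) (toL M) (toL L) (incl _ _ (inv_ker hg)) g :=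
        ⟨(ses_sub _ _ _).h1, hg, (ses_sub _ _ _).inj, hgs, fun i a => a.2,
          fun i b hb => ⟨⟨b, hb⟩, rfl⟩⟩
      have e3 := hss.1
      rw [← dv_toL, dv_ses S, euler_add_right, dv_sub] at e3
      have e4 := euler_nonpos_of_homZ (homZ_of_inj f hf hfi hHM)
      rw [hVd] at e4
      have e5 : Q.euler d (dv (toL L)) = 0 := by linarith
      rw [hde] at e5
      rw [← dv_toL]
      by_contra hne
      have hpos : 0 < Q.euler δ (dv (toL L)) := by
        rcases lt_or_gt_of_ne hne with h | h
        · nlinarith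
        · exact h
      rcases indec_cases hanti hM0 hN1 hE (toL L) ((indec_iff L).1 hI) with h | h
      · have := h _ (inv_top _)
        rw [sdv_top] at this
        linarith
      · have := euler_nonneg_of_extZ (star hanti hM0 hN1 hE _ _ hSV h)
        rw [hVd] at this
        nlinarith
    refine ⟨⟨homDim_zero.2 hHM, extDim_zero.2 (extZ_of_homZ hHM ?_)⟩, hreg⟩
    have e1 := (regular_semistable hanti hM0 hN1 hE (toL M) (regular_L hreg)).2
    have e2 := hss.1
    rw [← dv_toL, hde, e1] at e2
    rw [hVd]; linarith
  · rintro ⟨⟨h1, h2⟩, hreg⟩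
    obtain ⟨hsl, h0⟩ := regular_semistable hanti hM0 hN1 hE (toL M) (regular_L hreg)
    have hH := homDim_zero.1 h1
    have e1 := euler_nonneg_of_extZ (extDim_zero.1 h2)
    have e2 := euler_nonpos_of_homZ hH
    rw [hVd] at e1 e2
    refine ⟨?_, ?_⟩
    · rw [← dv_toL, hde, h0]; linarith
    · rintro L ⟨f, hf, hi⟩
      have hi' : ∀ i, Function.Injective (toF f i) := hi
      have hf' := (isHom_iff f).1 hf
      have e3 := euler_nonpos_of_homZ (homZ_of_inj _ hf' hi' hH)
      have e4 := subsLe_inj hf' hi' hsl _ (inv_top _)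
      rw [sdv_top] at e4
      rw [hVd] at e3
      rw [← dv_toL, hde]
      nlinarith

end SSNR

open QRep in
/-- if `d` has canonical decomposition `d̂ ⊕ δ^s` with `s ≥ 1`
(`d̂` a sum of real Schur roots) and `V` is the rigid general representation of
dimension vector `d̂`, then rep(Q)_d = V^⊥ ∩ Reg. -/
theorem semistable_with_null_root (k : Type) [Field k] [IsAlgClosed k]
    (Q : FinQuiver) (hQ : Q.IsEuclidean) (δ : Fin Q.n → ℤ) (hδ : Q.IsNullRoot δ)
    (s : ℕ) (hs : 1 ≤ s) (reals : List (Fin Q.n → ℤ))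
    (hreals : ∀ α ∈ reals, IsSchurRoot k Q α ∧ Q.euler α α = 1)
    (d : Fin Q.n → ℤ)
    (hcd : IsCanonDecomp k Q d (reals ++ List.replicate s δ))
    (V : QRep k Q) (hV : extDim V V = 0) (hVd : V.dimVec = reals.sum) :
    ∀ M : QRep k Q, SemiStable d M ↔ (RPerp V M ∧ RegularRep δ M) := by
  have : Infinite k := IsAlgClosed.instInfinite
  obtain ⟨-, -, hpsd, -⟩ := hQ
  obtain ⟨hδpos, hδ0, -⟩ := hδ
  obtain ⟨hsum, hschur, hext⟩ := hcd
  have hanti := SSNR.euler_null hpsd hδ0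
  have hδm : δ ∈ reals ++ List.replicate s δ := by
    simp; right; omega
  obtain ⟨M0, hM0, hI0, hb0⟩ := hschur δ hδm
  have hM0' : SSNR.dv (SSNR.toL M0) = δ := by rw [SSNR.dv_toL, hM0]
  obtain ⟨N1, hN1, hE⟩ := SSNR.brick_generic (SSNR.toL M0) (by rw [hM0', hδ0])
    ((SSNR.nonzero_iff M0).1 hI0.1) (SSNR.endo_scalar hI0 hb0)
  have hlen : (reals ++ List.replicate s δ).length = reals.length + s := by simp
  have hboth : ∀ α ∈ reals, ExtZero k Q α δ ∧ ExtZero k Q δ α := by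
    intro α hα
    obtain ⟨i, hi, rfl⟩ := List.getElem_of_mem hα
    have g1 : (reals ++ List.replicate s δ).get ⟨i, by omega⟩ = reals[i] := by
      simp [List.getElem_append_left hi]
    have g2 : (reals ++ List.replicate s δ).get ⟨reals.length, by omega⟩ = δ := by
      simp
    have hne : (⟨i, by omega⟩ : Fin (reals ++ List.replicate s δ).length) ≠
        ⟨reals.length, by omega⟩ := by
      intro h; have := congrArg Fin.val h; simp at this; omega
    have a1 := hext _ _ hne
    have a2 := hext _ _ hne.symm
    rw [g1, g2] at a1 a2
    exact ⟨a1, a2⟩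
  have hv : Q.euler δ reals.sum = 0 := by
    refine SSNR.euler_list _ fun α hα => ?_
    have h1 := SSNR.extZero_nonneg (hboth α hα).1
    have h2 := SSNR.extZero_nonneg (hboth α hα).2
    rw [hanti] at h1
    omega
  obtain ⟨W, N, hW, hN, hWN⟩ := SSNR.build_W (SSNR.toL M0) hM0' reals (fun α hα => (hboth α hα).1)
  have hVd' : SSNR.dv (SSNR.toL V) = reals.sum := by rw [SSNR.dv_toL, hVd]
  have hV' := SSNR.extDim_zero.1 hV
  have hVN := SSNR.rigid_generic (hW.trans hVd'.symm) hV' hWN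
  intro M
  refine SSNR.core hanti hM0' (hN1.trans hM0') hE (s := (s : ℤ)) (by omega) ?_ hv hV' hVd' hN hVN M
  rw [← hsum]
  simp
end
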